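/- Let 𝛑 be a policy ensemble, Lipschitz continuous in α up to finitely many discontinuities, with 𝛍 = Ψ(𝛑). Under Assumptions (W) and (Lip), consider the N-agent policy (π¹,…,π^{i−1},π̂,π^{i+1},…,π^N) where (π¹,…,π^N) = Γ_N(𝛑) and π̂ ∈ Π is arbitrary. Then for any family 𝒢 of functions g : 𝒳 → ℝ uniformly bounded by some M_g > 0, and any ε, p > 0 and t ∈ 𝒯, there exists N' such that for all N > N': sup_{g∈𝒢} |E[g(X^i_t)] − E[g(X̂^{i/N}_t)]| < ε, uniformly over all deviations π̂ ∈ Π and all i in some set 𝒲_N ⊆ 𝒱_N with |𝒲_N| ≥ ⌊(1−p)N⌋. -/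

import Mathlib

open MeasureTheory Filter
open scoped BigOperators

namespace GMFG

variable {𝒳 𝒰 : Type*}

/-- The probability simplex 𝒫(𝒳) on a finite set, as probability mass functions. -/
def simplex (𝒳 : Type*) [Fintype 𝒳] : Set (𝒳 → ℝ) :=
  {p | (∀ x, 0 ≤ p x) ∧ ∑ x, p x = 1}

/-- The set ℬ₁(𝒳) of (sub-probability) measures with total mass at most 1,
as mass functions. -/
def subProb (𝒳 : Type*) [Fintype 𝒳] : Set (𝒳 → ℝ) :=
  {p | (∀ x, 0 ≤ p x) ∧ ∑ x, p x ≤ 1}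

/-- L¹ distance between measures on a finite set. -/
noncomputable def l1dist [Fintype 𝒳] (ν ν' : 𝒳 → ℝ) : ℝ := ∑ x, |ν x - ν' x|

/-- Markovian feedback policies π ∈ Π = 𝒫(𝒰)^{𝒯×𝒳}. -/
def IsPolicy [Fintype 𝒰] (π : ℕ → 𝒳 → 𝒰 → ℝ) : Prop :=
  ∀ t x, (∀ u, 0 ≤ π t x u) ∧ ∑ u, π t x u = 1

/-- P : 𝒳×𝒰×ℬ₁(𝒳) → 𝒫(𝒳) is a transition kernel. -/
def IsKernel [Fintype 𝒳] [Fintype 𝒰] (P : 𝒳 → 𝒰 → (𝒳 → ℝ) → 𝒳 → ℝ) : Prop :=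
  ∀ x u ν, ν ∈ subProb 𝒳 → P x u ν ∈ simplex 𝒳

/-- Lipschitz continuity of the transition kernel w.r.t. the L¹ norm. -/
def KernelLipschitz [Fintype 𝒳] [Fintype 𝒰] (P : 𝒳 → 𝒰 → (𝒳 → ℝ) → 𝒳 → ℝ) (L : ℝ) : Prop :=
  ∀ x u ν ν', ν ∈ subProb 𝒳 → ν' ∈ subProb 𝒳 → l1dist (P x u ν) (P x u ν') ≤ L * l1dist ν ν'

/-- Lipschitz continuity of the reward w.r.t. the L¹ norm. -/
def RewardLipschitz [Fintype 𝒳] [Fintype 𝒰] (r : 𝒳 → 𝒰 → (𝒳 → ℝ) → ℝ) (L : ℝ) : Prop :=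
  ∀ x u ν ν', ν ∈ subProb 𝒳 → ν' ∈ subProb 𝒳 → |r x u ν - r x u ν'| ≤ L * l1dist ν ν'

/-- A graphon: symmetric, measurable, [0,1]-valued. -/
def IsGraphon (W : ℝ → ℝ → ℝ) : Prop :=
  Measurable (Function.uncurry W) ∧ (∀ a b, W a b = W b a) ∧ ∀ a b, W a b ∈ Set.Icc (0:ℝ) 1

/-- Lipschitz continuity of a graphon on [0,1]². -/
def GraphonLipschitz (W : ℝ → ℝ → ℝ) (L : ℝ) : Prop :=
  ∀ a b a' b' : ℝ, a ∈ Set.Icc (0:ℝ) 1 → b ∈ Set.Icc (0:ℝ) 1 → a' ∈ Set.Icc (0:ℝ) 1 →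
    b' ∈ Set.Icc (0:ℝ) 1 → |W a b - W a' b'| ≤ L * (|a - a'| + |b - b'|)

/-- The neighborhood mean field 𝔾^α = ∫₀¹ W(α,β) ν^β dβ of a state marginal ensemble ν. -/
noncomputable def nbhd [Fintype 𝒳] (W : ℝ → ℝ → ℝ) (ν : ℝ → 𝒳 → ℝ) (α : ℝ) : 𝒳 → ℝ :=
  fun x => ∫ β in Set.Ioc (0:ℝ) 1, W α β * ν β x

/-- 𝛍 = Ψ(𝛑): the (measurable) mean field ensemble generated by the policy ensemble 𝛑,
via μ^α_0 = μ₀ and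
μ^α_{t+1}(x') = Σ_{x,u} μ^α_t(x) π^α_t(u|x) P(x'|x,u,𝔾^α_t). -/
def IsMeanFieldOf [Fintype 𝒳] [Fintype 𝒰] (W : ℝ → ℝ → ℝ) (P : 𝒳 → 𝒰 → (𝒳 → ℝ) → 𝒳 → ℝ)
    (μ0 : 𝒳 → ℝ) (πe : ℝ → ℕ → 𝒳 → 𝒰 → ℝ) (μ : ℕ → ℝ → 𝒳 → ℝ) : Prop :=
  (∀ t x, Measurable fun α => μ t α x) ∧
  (∀ α ∈ Set.Icc (0:ℝ) 1, μ 0 α = μ0) ∧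
  ∀ t : ℕ, ∀ α ∈ Set.Icc (0:ℝ) 1, ∀ x' : 𝒳,
    μ (t+1) α x' = ∑ x, μ t α x * ∑ u, πe α t x u * P x u (nbhd W (μ t) α) x'

/-- The law of the state of a single mean field agent with neighborhood mean field
G and policy π: X_0 ∼ μ₀, U_t ∼ π_t(·|X_t), X_{t+1} ∼ P(·|X_t,U_t,G_t). -/
noncomputable def stateLaw [Fintype 𝒳] [Fintype 𝒰] (P : 𝒳 → 𝒰 → (𝒳 → ℝ) → 𝒳 → ℝ)
    (μ0 : 𝒳 → ℝ) (G : ℕ → 𝒳 → ℝ) (π : ℕ → 𝒳 → 𝒰 → ℝ) : ℕ → 𝒳 → ℝ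
  | 0 => μ0
  | (t+1) => fun x' => ∑ x, stateLaw P μ0 G π t x * ∑ u, π t x u * P x u (G t) x'

/-- Mean field objective J(π) = E[Σ_{t<T} r(X_t,U_t,G_t)] of a single agent whose
neighborhood mean field is G. -/
noncomputable def Jmf [Fintype 𝒳] [Fintype 𝒰] (T : ℕ) (r : 𝒳 → 𝒰 → (𝒳 → ℝ) → ℝ)
    (P : 𝒳 → 𝒰 → (𝒳 → ℝ) → 𝒳 → ℝ) (μ0 : 𝒳 → ℝ) (G : ℕ → 𝒳 → ℝ) (π : ℕ → 𝒳 → 𝒰 → ℝ) : ℝ :=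
  ∑ t ∈ Finset.range T, ∑ x, stateLaw P μ0 G π t x * ∑ u, π t x u * r x u (G t)

/-- A Graphon Mean Field Equilibrium: a measurable policy ensemble 𝛑 and mean field
ensemble 𝛍 with 𝛍 = Ψ(𝛑) and π^α optimal for J^𝛍_α for every α ∈ [0,1]. -/
def IsGMFE [Fintype 𝒳] [Fintype 𝒰] (T : ℕ) (W : ℝ → ℝ → ℝ) (P : 𝒳 → 𝒰 → (𝒳 → ℝ) → 𝒳 → ℝ)
    (r : 𝒳 → 𝒰 → (𝒳 → ℝ) → ℝ) (μ0 : 𝒳 → ℝ)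
    (πe : ℝ → ℕ → 𝒳 → 𝒰 → ℝ) (μ : ℕ → ℝ → 𝒳 → ℝ) : Prop :=
  (∀ t x u, Measurable fun α => πe α t x u) ∧
  (∀ α ∈ Set.Icc (0:ℝ) 1, IsPolicy (πe α)) ∧
  IsMeanFieldOf W P μ0 πe μ ∧
  ∀ α ∈ Set.Icc (0:ℝ) 1, ∀ π' : ℕ → 𝒳 → 𝒰 → ℝ, IsPolicy π' →
    Jmf T r P μ0 (fun t => nbhd W (μ t) α) π' ≤ Jmf T r P μ0 (fun t => nbhd W (μ t) α) (πe α)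

/-- α ↦ π^α is Lipschitz continuous up to a finite set D of discontinuities. -/
def EnsembleLipschitzUpTo [Fintype 𝒳] [Fintype 𝒰] (πe : ℝ → ℕ → 𝒳 → 𝒰 → ℝ) : Prop :=
  ∃ (L : ℝ) (D : Finset ℝ), ∀ (t : ℕ) (x : 𝒳) (u : 𝒰),
    ∀ α ∈ Set.Icc (0:ℝ) 1, ∀ β ∈ Set.Icc (0:ℝ) 1,
      (∀ d ∈ D, d ∉ Set.uIcc α β) → |πe α t x u - πe β t x u| ≤ L * |α - β|

/-- Edge indicators of a simple (undirected) graph. -/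
def IsEdgeWeights {N : ℕ} (ξ : Fin N → Fin N → ℝ) : Prop :=
  (∀ i j, ξ i j = 0 ∨ ξ i j = 1) ∧ ∀ i j, ξ i j = ξ j i

/-- Empirical neighborhood mean field 𝔾ⁱ = (1/N) Σ_j ξ_{ij} δ_{X^j}. -/
noncomputable def empNbhd [Fintype 𝒳] [DecidableEq 𝒳] {N : ℕ} (ξ : Fin N → Fin N → ℝ)
    (X : Fin N → 𝒳) (i : Fin N) : 𝒳 → ℝ :=
  fun x => (N : ℝ)⁻¹ * ∑ j, ξ i j * (if X j = x then 1 else 0)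

/-- The joint law of the N agents' states at time t: X^i_0 ∼ μ₀ i.i.d.,
U^i_t ∼ π^i_t(·|X^i_t), X^i_{t+1} ∼ P(·|X^i_t,U^i_t,𝔾^i_t) conditionally independently. -/
noncomputable def jointLaw [Fintype 𝒳] [DecidableEq 𝒳] [Fintype 𝒰] {N : ℕ}
    (P : 𝒳 → 𝒰 → (𝒳 → ℝ) → 𝒳 → ℝ) (μ0 : 𝒳 → ℝ) (ξ : Fin N → Fin N → ℝ)
    (πs : Fin N → ℕ → 𝒳 → 𝒰 → ℝ) : ℕ → (Fin N → 𝒳) → ℝ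
  | 0 => fun X => ∏ i, μ0 (X i)
  | (t+1) => fun Y => ∑ X : Fin N → 𝒳, jointLaw P μ0 ξ πs t X *
      ∏ i, ∑ u, πs i t (X i) u * P (X i) u (empNbhd ξ X i) (Y i)

/-- The objective J^N_i = E[Σ_{t<T} r(X^i_t,U^i_t,𝔾^i_t)] of agent i in the N-agent game. -/
noncomputable def JN [Fintype 𝒳] [DecidableEq 𝒳] [Fintype 𝒰] {N : ℕ} (T : ℕ)
    (r : 𝒳 → 𝒰 → (𝒳 → ℝ) → ℝ) (P : 𝒳 → 𝒰 → (𝒳 → ℝ) → 𝒳 → ℝ) (μ0 : 𝒳 → ℝ)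
    (ξ : Fin N → Fin N → ℝ) (πs : Fin N → ℕ → 𝒳 → 𝒰 → ℝ) (i : Fin N) : ℝ :=
  ∑ t ∈ Finset.range T, ∑ X : Fin N → 𝒳, jointLaw P μ0 ξ πs t X *
    ∑ u, πs i t (X i) u * r (X i) u (empNbhd ξ X i)

/-- Γ_N(𝛑) = (π^{1/N},…,π^{N/N}) (agent i : Fin N has graphon index (i+1)/N). -/
noncomputable def gammaN (πe : ℝ → ℕ → 𝒳 → 𝒰 → ℝ) (N : ℕ) : Fin N → ℕ → 𝒳 → 𝒰 → ℝ :=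
  fun i => πe ((((i : ℕ) : ℝ) + 1) / N)

/-- The step graphon W_N of a finite graph: W_N(x,y) = ξ_{⌈Nx⌉,⌈Ny⌉}. -/
noncomputable def stepGraphon {N : ℕ} (ξ : Fin N → Fin N → ℝ) : ℝ → ℝ → ℝ := fun a b =>
  ∑ i : Fin N, ∑ j : Fin N,
    (if ((i : ℕ) : ℝ) / N < a ∧ a ≤ (((i : ℕ) : ℝ) + 1) / N then 1 else 0) *
    (if ((j : ℕ) : ℝ) / N < b ∧ b ≤ (((j : ℕ) : ℝ) + 1) / N then 1 else 0) * ξ i j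

/-- Assumption (W): ‖W_N − W‖_{L∞→L1} → 0, i.e.
sup_{‖g‖∞ ≤ 1} ∫₀¹ |∫₀¹ (W_N(α,β) − W(α,β)) g(β) dβ| dα → 0. -/
def OpConvergesTo (WN : (N : ℕ) → ℝ → ℝ → ℝ) (W : ℝ → ℝ → ℝ) : Prop :=
  ∀ ε > (0:ℝ), ∃ N₀ : ℕ, ∀ N ≥ N₀, ∀ g : ℝ → ℝ, Measurable g → (∀ β, |g β| ≤ 1) →
    (∫ α in Set.Ioc (0:ℝ) 1, |∫ β in Set.Ioc (0:ℝ) 1, (WN N α β - W α β) * g β|) ≤ ε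

/-- ‖W_N − W‖_{L∞→L1} = O(1/√N). -/
def OpRateSqrt (WN : (N : ℕ) → ℝ → ℝ → ℝ) (W : ℝ → ℝ → ℝ) : Prop :=
  ∃ C : ℝ, ∀ N : ℕ, 1 ≤ N → ∀ g : ℝ → ℝ, Measurable g → (∀ β, |g β| ≤ 1) →
    (∫ α in Set.Ioc (0:ℝ) 1, |∫ β in Set.Ioc (0:ℝ) 1, (WN N α β - W α β) * g β|) ≤ C / Real.sqrt N

/-- 𝛍^N_t(f) = ∫₀¹ f(X^{⌈Nα⌉}, α) dα, the integral of f against the random empirical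
step measure ensemble. -/
noncomputable def empInt [Fintype 𝒳] {N : ℕ} (f : 𝒳 → ℝ → ℝ) (X : Fin N → 𝒳) : ℝ :=
  ∑ i : Fin N, ∫ α in Set.Ioc (((i : ℕ) : ℝ) / N) ((((i : ℕ) : ℝ) + 1) / N), f (X i) α

/-- 𝛍_t(f) = ∫₀¹ Σ_x f(x,α) μ^α_t(x) dα. -/
noncomputable def mfInt [Fintype 𝒳] (f : 𝒳 → ℝ → ℝ) (ν : ℝ → 𝒳 → ℝ) : ℝ :=
  ∫ α in Set.Ioc (0:ℝ) 1, ∑ x, f x α * ν α x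

/-- The representative α_m = (m+1)/M of the m-th equivalence class Ĩ_m = (m/M,(m+1)/M]. -/
noncomputable def rep (M : ℕ) (m : Fin M) : ℝ := (((m : ℕ) : ℝ) + 1) / M

/-- Discretized neighborhood mean field 𝔾̂^{α_m} = (1/M) Σ_n W(α_m,α_n) ν^{α_n}. -/
noncomputable def approxNbhd [Fintype 𝒳] {M : ℕ} (W : ℝ → ℝ → ℝ) (ν : Fin M → 𝒳 → ℝ)
    (m : Fin M) : 𝒳 → ℝ :=
  fun x => (M : ℝ)⁻¹ * ∑ n, W (rep M m) (rep M n) * ν n x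

/-- The approximate mean field μ̂ = Ψ̂(𝛑) of the M equivalence classes method. -/
noncomputable def approxMF [Fintype 𝒳] [Fintype 𝒰] {M : ℕ} (W : ℝ → ℝ → ℝ)
    (P : 𝒳 → 𝒰 → (𝒳 → ℝ) → 𝒳 → ℝ) (μ0 : 𝒳 → ℝ) (πm : Fin M → ℕ → 𝒳 → 𝒰 → ℝ) :
    ℕ → Fin M → 𝒳 → ℝ
  | 0 => fun _ => μ0
  | (t+1) => fun m x' => ∑ x, approxMF W P μ0 πm t m x *
      ∑ u, πm m t x u * P x u (approxNbhd W (approxMF W P μ0 πm t) m) x'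

/-- A solution (𝛑, 𝛍) of the M equivalence classes method: 𝛑 is determined by policies
π^{α_m} (one per class), each optimal for the generated approximate mean field 𝛍 = Ψ̂(𝛑). -/
def IsEqClassSolution [Fintype 𝒳] [Fintype 𝒰] (T : ℕ) {M : ℕ} (W : ℝ → ℝ → ℝ)
    (P : 𝒳 → 𝒰 → (𝒳 → ℝ) → 𝒳 → ℝ) (r : 𝒳 → 𝒰 → (𝒳 → ℝ) → ℝ) (μ0 : 𝒳 → ℝ)
    (πm : Fin M → ℕ → 𝒳 → 𝒰 → ℝ) : Prop :=
  (∀ m, IsPolicy (πm m)) ∧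
  ∀ m, ∀ π' : ℕ → 𝒳 → 𝒰 → ℝ, IsPolicy π' →
    Jmf T r P μ0 (fun t => approxNbhd W (approxMF W P μ0 πm t) m) π'
      ≤ Jmf T r P μ0 (fun t => approxNbhd W (approxMF W P μ0 πm t) m) (πm m)

/-- The optimal action value function Q with k steps to go from time t,
Q(t,x,u) = r(x,u,G_t) + Σ_{x'} P(x'|x,u,G_t) max_{u'} Q(t+1,x',u'). -/
noncomputable def Qfun [Fintype 𝒳] [Fintype 𝒰] [Nonempty 𝒰] (r : 𝒳 → 𝒰 → (𝒳 → ℝ) → ℝ)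
    (P : 𝒳 → 𝒰 → (𝒳 → ℝ) → 𝒳 → ℝ) (G : ℕ → 𝒳 → ℝ) : ℕ → ℕ → 𝒳 → 𝒰 → ℝ
  | 0 => fun _ _ _ => 0
  | (k+1) => fun t x u => r x u (G t) + ∑ x', P x u (G t) x' *
      Finset.univ.sup' Finset.univ_nonempty (fun u' => Qfun r P G k (t+1) x' u')

/-- The Boltzmann (softmax) policy Φ̂_η(𝛍) of the M equivalence classes method with
horizon T, temperature η and block mean field ν. -/
noncomputable def boltzmann [Fintype 𝒳] [Fintype 𝒰] [Nonempty 𝒰] (T : ℕ) (η : ℝ)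
    (r : 𝒳 → 𝒰 → (𝒳 → ℝ) → ℝ) (P : 𝒳 → 𝒰 → (𝒳 → ℝ) → 𝒳 → ℝ) (W : ℝ → ℝ → ℝ) {M : ℕ}
    (ν : ℕ → Fin M → 𝒳 → ℝ) : Fin M → ℕ → 𝒳 → 𝒰 → ℝ :=
  fun m t x u =>
    Real.exp (Qfun r P (fun s => approxNbhd W (ν s) m) (T - t) t x u / η) /
      ∑ u' : 𝒰, Real.exp (Qfun r P (fun s => approxNbhd W (ν s) m) (T - t) t x u' / η)

/-- One step 𝛍 ↦ Ψ̂(Φ̂_η(𝛍)) of the Boltzmann fixed point iteration. -/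
noncomputable def boltzIter [Fintype 𝒳] [Fintype 𝒰] [Nonempty 𝒰] (T : ℕ) (η : ℝ)
    (r : 𝒳 → 𝒰 → (𝒳 → ℝ) → ℝ) (P : 𝒳 → 𝒰 → (𝒳 → ℝ) → 𝒳 → ℝ) (W : ℝ → ℝ → ℝ) (μ0 : 𝒳 → ℝ)
    {M : ℕ} (ν : ℕ → Fin M → 𝒳 → ℝ) : ℕ → Fin M → 𝒳 → ℝ :=
  fun t => approxMF W P μ0 (boltzmann T η r P W ν) t

/-!
Conditionally on the past the agents move independently, so population averages of bounded
observables fluctuate by `1/√N` in `L¹` per step, and a Lipschitz kernel turns the fluctuations and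
the neighborhood errors at time `t` into a bound at time `t + 1`. One deviating agent changes the
neighborhood of any other agent by at most `2/N`, hence all bounds are uniform in the deviation.
What remains is the distance between the graph neighborhoods of independent mean field agents and
the graphon neighborhoods. Since `α ↦ μ^α` is almost everywhere continuous, sampling it on the grid
costs nothing in the limit, and the convergence `W_N → W` in the `L∞ → L1` operator norm makes this
distance small on average over the agents; Markov's inequality then selects the good agents.
-/

open scoped Matrix Topology

section FiniteLaws

variable {Ω Ω' : Type*} [Fintype Ω] {q q' : Ω → ℝ} {f : Ω → ℝ} {C : ℝ}

theorem l1dist_nonneg (q q' : Ω → ℝ) : 0 ≤ l1dist q q' :=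
  Finset.sum_nonneg fun _ _ => abs_nonneg _

theorem l1dist_triangle (q q' q'' : Ω → ℝ) : l1dist q q'' ≤ l1dist q q' + l1dist q' q'' := by
  rw [l1dist, l1dist, l1dist, ← Finset.sum_add_distrib]
  exact Finset.sum_le_sum fun x _ => abs_sub_le (q x) (q' x) (q'' x)

theorem abs_apply_sub_le_l1dist (q q' : Ω → ℝ) (ω : Ω) : |q ω - q' ω| ≤ l1dist q q' :=
  Finset.single_le_sum (f := fun ω => |q ω - q' ω|) (fun _ _ => abs_nonneg _) (Finset.mem_univ ω)

theorem simplex_subset_subProb : simplex Ω ⊆ subProb Ω := fun _ hq => ⟨hq.1, hq.2.le⟩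

theorem abs_apply_le_one_of_mem_subProb (hq : q ∈ subProb Ω) (ω : Ω) : |q ω| ≤ 1 :=
  (abs_of_nonneg (hq.1 ω)).trans_le
    ((Finset.single_le_sum (fun ω _ => hq.1 ω) (Finset.mem_univ ω)).trans hq.2)

theorem l1dist_le_two (hq : q ∈ subProb Ω) (hq' : q' ∈ subProb Ω) : l1dist q q' ≤ 2 := calc
  l1dist q q' ≤ ∑ ω, (q ω + q' ω) := Finset.sum_le_sum fun ω _ => by
    rw [abs_le]; constructor <;> linarith [hq.1 ω, hq'.1 ω]
  _ ≤ 2 := by rw [Finset.sum_add_distrib]; linarith [hq.2, hq'.2]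

theorem smul_mem_subProb {c : ℝ} (hc : c ∈ Set.Icc (0 : ℝ) 1) (hq : q ∈ subProb Ω) :
    c • q ∈ subProb Ω := by
  refine ⟨fun ω => mul_nonneg hc.1 (hq.1 ω), ?_⟩
  simpa only [Pi.smul_apply, smul_eq_mul, ← Finset.mul_sum] using
    mul_le_one₀ hc.2 (Finset.sum_nonneg fun ω _ => hq.1 ω) hq.2

theorem dotProduct_const_of_mem_simplex (hq : q ∈ simplex Ω) (c : ℝ) :
    (q ⬝ᵥ fun _ => c) = c := by
  simp only [dotProduct, ← Finset.sum_mul, hq.2, one_mul]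

theorem dotProduct_le_of_mem_simplex (hq : q ∈ simplex Ω) (hf : ∀ ω, f ω ≤ C) : q ⬝ᵥ f ≤ C :=
  (dotProduct_le_dotProduct_of_nonneg_left hf hq.1).trans_eq (dotProduct_const_of_mem_simplex hq C)

theorem abs_dotProduct_le_dotProduct_abs (hq : 0 ≤ q) (f : Ω → ℝ) :
    |q ⬝ᵥ f| ≤ q ⬝ᵥ fun ω => |f ω| :=
  (Finset.abs_sum_le_sum_abs _ _).trans_eq <| Finset.sum_congr rfl fun ω _ => by
    rw [abs_mul, abs_of_nonneg (hq ω)]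

theorem abs_dotProduct_le_of_mem_simplex (hq : q ∈ simplex Ω) (hf : ∀ ω, |f ω| ≤ C) :
    |q ⬝ᵥ f| ≤ C :=
  (abs_dotProduct_le_dotProduct_abs hq.1 f).trans (dotProduct_le_of_mem_simplex hq hf)

theorem abs_dotProduct_sub_le_mul_l1dist (q q' : Ω → ℝ) (hf : ∀ ω, |f ω| ≤ C) :
    |q ⬝ᵥ f - q' ⬝ᵥ f| ≤ C * l1dist q q' := by
  rw [← sub_dotProduct, l1dist, Finset.mul_sum]
  refine (Finset.abs_sum_le_sum_abs _ _).trans (Finset.sum_le_sum fun ω _ => ?_)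
  rw [abs_mul, mul_comm, Pi.sub_apply]
  exact mul_le_mul_of_nonneg_right (hf ω) (abs_nonneg _)

theorem sq_dotProduct_le_dotProduct_sq (hq : q ∈ simplex Ω) (f : Ω → ℝ) :
    (q ⬝ᵥ f) ^ 2 ≤ q ⬝ᵥ fun ω => f ω ^ 2 :=
  Real.pow_arith_mean_le_arith_mean_pow_of_even Finset.univ q f (fun ω _ => hq.1 ω) hq.2 even_two

theorem dotProduct_sq_sub_mean_le (hq : q ∈ simplex Ω) (f : Ω → ℝ) :
    (q ⬝ᵥ fun ω => (f ω - q ⬝ᵥ f) ^ 2) ≤ q ⬝ᵥ fun ω => f ω ^ 2 := by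
  set c := q ⬝ᵥ f with hc
  have hexpand : (fun ω => (f ω - c) ^ 2)
      = (fun ω => f ω ^ 2) - (2 * c) • f + fun _ => c ^ 2 := by
    ext ω; simp only [Pi.add_apply, Pi.sub_apply, Pi.smul_apply, smul_eq_mul]; ring
  rw [hexpand, dotProduct_add, dotProduct_sub, dotProduct_smul, ← hc,
    dotProduct_const_of_mem_simplex hq, smul_eq_mul]
  nlinarith [sq_nonneg c]

variable [Fintype Ω'] {K K' : Matrix Ω Ω' ℝ}

theorem vecMul_mem_simplex (hq : q ∈ simplex Ω) (hK : ∀ ω, K ω ∈ simplex Ω') :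
    q ᵥ* K ∈ simplex Ω' := by
  refine ⟨fun ω' => dotProduct_nonneg_of_nonneg hq.1 fun ω => (hK ω).1 ω', ?_⟩
  simp only [Matrix.vecMul, dotProduct]
  rw [Finset.sum_comm]
  simp only [← Finset.mul_sum, (hK _).2, mul_one, hq.2]

theorem l1dist_vecMul_le (hq : q ∈ simplex Ω) (hK : ∀ ω, l1dist (K ω) (K' ω) ≤ C) :
    l1dist (q ᵥ* K) (q ᵥ* K') ≤ C := calc
  l1dist (q ᵥ* K) (q ᵥ* K') ≤ ∑ ω', q ⬝ᵥ fun ω => |K ω ω' - K' ω ω'| :=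
    Finset.sum_le_sum fun ω' _ => by
      rw [Matrix.vecMul, Matrix.vecMul, ← dotProduct_sub]
      exact abs_dotProduct_le_dotProduct_abs hq.1 _
  _ = q ⬝ᵥ fun ω => l1dist (K ω) (K' ω) := by
    simp only [dotProduct, l1dist, Finset.mul_sum]
    exact Finset.sum_comm
  _ ≤ C := dotProduct_le_of_mem_simplex hq hK

end FiniteLaws

section ProductLaws

variable {ι Ω : Type*} [Fintype ι] [Fintype Ω] {q : ι → Ω → ℝ}

/-- The law of a family of independent random variables with laws `q j`. -/
def prodLaw (q : ι → Ω → ℝ) (Y : ι → Ω) : ℝ := ∏ j, q j (Y j)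

variable [DecidableEq ι]

theorem prodLaw_dotProduct_prod_univ (q f : ι → Ω → ℝ) :
    (prodLaw q ⬝ᵥ fun Y => ∏ j, f j (Y j)) = ∏ j, q j ⬝ᵥ f j := by
  simp only [dotProduct, prodLaw, ← Finset.prod_mul_distrib]
  rw [Finset.prod_univ_sum, Fintype.piFinset_univ]

theorem prodLaw_mem_simplex (hq : ∀ j, q j ∈ simplex Ω) : prodLaw q ∈ simplex (ι → Ω) := by
  refine ⟨fun Y => Finset.prod_nonneg fun j _ => (hq j).1 _, ?_⟩
  simpa only [dotProduct, Finset.prod_const_one, mul_one, (hq _).2] using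
    prodLaw_dotProduct_prod_univ q fun _ _ => 1

theorem prodLaw_dotProduct_prod (hq : ∀ j, q j ∈ simplex Ω) (s : Finset ι) (f : ι → Ω → ℝ) :
    (prodLaw q ⬝ᵥ fun Y => ∏ j ∈ s, f j (Y j)) = ∏ j ∈ s, q j ⬝ᵥ f j := by
  have hmarginal (j : ι) :
      (q j ⬝ᵥ fun ω => if j ∈ s then f j ω else 1) = if j ∈ s then q j ⬝ᵥ f j else 1 := by
    split_ifs
    exacts [rfl, dotProduct_const_of_mem_simplex (hq j) 1]
  simpa only [hmarginal, Finset.prod_ite_mem, Finset.univ_inter] using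
    prodLaw_dotProduct_prod_univ q fun j ω => if j ∈ s then f j ω else 1

theorem prodLaw_dotProduct_eval (hq : ∀ j, q j ∈ simplex Ω) (i : ι) (f : Ω → ℝ) :
    (prodLaw q ⬝ᵥ fun Y => f (Y i)) = q i ⬝ᵥ f := by
  simpa only [Finset.prod_singleton] using prodLaw_dotProduct_prod hq {i} fun _ => f

theorem prodLaw_dotProduct_eval_mul_eval (hq : ∀ j, q j ∈ simplex Ω) {i j : ι} (hij : i ≠ j)
    (f : ι → Ω → ℝ) :
    (prodLaw q ⬝ᵥ fun Y => f i (Y i) * f j (Y j)) = (q i ⬝ᵥ f i) * (q j ⬝ᵥ f j) := by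
  simpa only [Finset.prod_pair hij] using prodLaw_dotProduct_prod hq {i, j} f

theorem prodLaw_dotProduct_sq_sum (hq : ∀ j, q j ∈ simplex Ω) {f : ι → Ω → ℝ}
    (hf : ∀ j, q j ⬝ᵥ f j = 0) :
    (prodLaw q ⬝ᵥ fun Y => (∑ j, f j (Y j)) ^ 2) = ∑ j, q j ⬝ᵥ fun ω => f j ω ^ 2 := by
  have hexpand : (fun Y : ι → Ω => (∑ j, f j (Y j)) ^ 2)
      = ∑ i, ∑ j, fun Y => f i (Y i) * f j (Y j) := by
    ext Y; simp only [sq, Finset.sum_mul_sum, Finset.sum_apply]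
  rw [hexpand, dotProduct_sum]
  refine Finset.sum_congr rfl fun i _ => ?_
  rw [dotProduct_sum, Finset.sum_eq_single i]
  · simpa only [sq] using prodLaw_dotProduct_eval hq i fun ω => f i ω * f i ω
  · intro j _ hji
    rw [prodLaw_dotProduct_eval_mul_eval hq hji.symm, hf, zero_mul]
  · simp

end ProductLaws

section Fluctuation

variable {N : ℕ} {Ω : Type*} [Fintype Ω] {q : (Fin N → Ω) → ℝ} {m a : Fin N → Ω → ℝ} {δ : ℝ}

theorem inv_mul_sum_le {F : Fin N → ℝ} {C : ℝ} (hC : 0 ≤ C) (hF : ∀ j, F j ≤ C) :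
    (N : ℝ)⁻¹ * ∑ j, F j ≤ C := calc
  (N : ℝ)⁻¹ * ∑ j, F j ≤ (N : ℝ)⁻¹ * ∑ _j : Fin N, C := by gcongr with j; exact hF j
  _ = ((N : ℝ)⁻¹ * N) * C := by simp [mul_assoc]
  _ ≤ C := mul_le_of_le_one_left hC (inv_mul_le_one)

/-- The population average of `a j (X j)`, centred at its mean when agent `j` has law `m j`. -/
noncomputable def fluctuation (m a : Fin N → Ω → ℝ) (X : Fin N → Ω) : ℝ :=
  (N : ℝ)⁻¹ * ∑ j, (a j (X j) - m j ⬝ᵥ a j)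

/-- A weak law of large numbers with rate `δ` for a population with joint law `q`: population
averages of observables bounded by one are `δ`-close in `L¹` to what the laws `m j` predict.
The `m j` need not be the marginals of `q`. -/
def HasFluctuationBound (q : (Fin N → Ω) → ℝ) (m : Fin N → Ω → ℝ) (δ : ℝ) : Prop :=
  ∀ a : Fin N → Ω → ℝ, (∀ j ω, |a j ω| ≤ 1) → (q ⬝ᵥ fun X => |fluctuation m a X|) ≤ δ

theorem prodLaw_dotProduct_sq_fluctuation_le (hm : ∀ j, m j ∈ simplex Ω)
    (ha : ∀ j ω, |a j ω| ≤ 1) :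
    (prodLaw m ⬝ᵥ fun X => fluctuation m a X ^ 2) ≤ (N : ℝ)⁻¹ := by
  have hvariance (j : Fin N) : (m j ⬝ᵥ fun ω => (a j ω - m j ⬝ᵥ a j) ^ 2) ≤ 1 :=
    (dotProduct_sq_sub_mean_le (hm j) (a j)).trans <|
      dotProduct_le_of_mem_simplex (hm j) fun ω => (sq_le_one_iff_abs_le_one _).2 (ha j ω)
  have hcentred (j : Fin N) : (m j ⬝ᵥ fun ω => a j ω - m j ⬝ᵥ a j) = 0 :=
    (dotProduct_sub _ _ _).trans <| by rw [dotProduct_const_of_mem_simplex (hm j), sub_self]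
  calc (prodLaw m ⬝ᵥ fun X => fluctuation m a X ^ 2)
      = (N : ℝ)⁻¹ ^ 2 * prodLaw m ⬝ᵥ fun X => (∑ j, (a j (X j) - m j ⬝ᵥ a j)) ^ 2 := by
        rw [← smul_eq_mul, ← dotProduct_smul]; simp only [fluctuation, mul_pow]; rfl
    _ = (N : ℝ)⁻¹ * ((N : ℝ)⁻¹ * ∑ j, m j ⬝ᵥ fun ω => (a j ω - m j ⬝ᵥ a j) ^ 2) := by
        rw [prodLaw_dotProduct_sq_sum hm hcentred, sq, mul_assoc]
    _ ≤ (N : ℝ)⁻¹ := mul_le_of_le_one_right (by positivity) (inv_mul_sum_le zero_le_one hvariance)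

theorem hasFluctuationBound_prodLaw (hm : ∀ j, m j ∈ simplex Ω) :
    HasFluctuationBound (prodLaw m) m (√N)⁻¹ := by
  intro a ha
  refine le_of_abs_le (abs_le_of_sq_le_sq ?_ (by positivity))
  rw [inv_pow, Real.sq_sqrt N.cast_nonneg]
  refine (sq_dotProduct_le_dotProduct_sq (prodLaw_mem_simplex hm) _).trans ?_
  simpa only [sq_abs] using prodLaw_dotProduct_sq_fluctuation_le hm ha

theorem HasFluctuationBound.nonneg (h : HasFluctuationBound q m δ) (hq : 0 ≤ q) : 0 ≤ δ :=
  (dotProduct_nonneg_of_nonneg hq fun _ => abs_nonneg _).trans (h 0 (by simp))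

theorem prodLaw_dotProduct_abs_fluctuation_vecMul_le {K : Fin N → Ω → ℝ}
    (hK : ∀ j, K j ∈ simplex Ω) (m : Fin N → Ω → ℝ) (A : Fin N → Matrix Ω Ω ℝ) (X : Fin N → Ω)
    (ha : ∀ j ω, |a j ω| ≤ 1) :
    (prodLaw K ⬝ᵥ fun Y => |fluctuation (fun j => m j ᵥ* A j) a Y|) ≤
      (√N)⁻¹ + (N : ℝ)⁻¹ * ∑ j, l1dist (K j) (A j (X j))
        + |fluctuation m (fun j => A j *ᵥ a j) X| := by
  have hsplit (Y : Fin N → Ω) : fluctuation (fun j => m j ᵥ* A j) a Y = fluctuation K a Y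
      + (N : ℝ)⁻¹ * ∑ j, (K j ⬝ᵥ a j - A j (X j) ⬝ᵥ a j)
      + fluctuation m (fun j => A j *ᵥ a j) X := by
    simp only [fluctuation, ← mul_add, ← Finset.sum_add_distrib, ← Matrix.dotProduct_mulVec]
    congr 1
    refine Finset.sum_congr rfl fun j _ => ?_
    rw [Matrix.mulVec]
    ring
  have hdrift : |(N : ℝ)⁻¹ * ∑ j, (K j ⬝ᵥ a j - A j (X j) ⬝ᵥ a j)|
      ≤ (N : ℝ)⁻¹ * ∑ j, l1dist (K j) (A j (X j)) := by
    rw [abs_mul, abs_of_nonneg (by positivity : (0 : ℝ) ≤ (N : ℝ)⁻¹)]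
    gcongr
    refine (Finset.abs_sum_le_sum_abs _ _).trans (Finset.sum_le_sum fun j _ => ?_)
    simpa only [one_mul] using abs_dotProduct_sub_le_mul_l1dist (K j) (A j (X j)) (ha j)
  have hle (Y : Fin N → Ω) : |fluctuation (fun j => m j ᵥ* A j) a Y| ≤ |fluctuation K a Y|
      + ((N : ℝ)⁻¹ * ∑ j, l1dist (K j) (A j (X j))
        + |fluctuation m (fun j => A j *ᵥ a j) X|) := by
    rw [hsplit Y]
    linarith [abs_add_three (fluctuation K a Y)
      ((N : ℝ)⁻¹ * ∑ j, (K j ⬝ᵥ a j - A j (X j) ⬝ᵥ a j))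
      (fluctuation m (fun j => A j *ᵥ a j) X)]
  have hprod := prodLaw_mem_simplex hK
  refine (dotProduct_le_dotProduct_of_nonneg_left hle hprod.1).trans ?_
  refine (dotProduct_add _ _ _).trans_le ?_
  rw [dotProduct_const_of_mem_simplex hprod, ← add_assoc]
  gcongr
  exact hasFluctuationBound_prodLaw hK a ha

end Fluctuation

section Population

variable [Fintype 𝒳] [Fintype 𝒰] {P : 𝒳 → 𝒰 → (𝒳 → ℝ) → 𝒳 → ℝ} {μ0 : 𝒳 → ℝ} {L δ : ℝ}
  {π : ℕ → 𝒳 → 𝒰 → ℝ} {t : ℕ} {ν ν' : 𝒳 → ℝ}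

/-- The transition matrix at time `t` of an agent using the policy `π` in the neighborhood mean
field `ν`. -/
def policyMatrix (P : 𝒳 → 𝒰 → (𝒳 → ℝ) → 𝒳 → ℝ) (π : ℕ → 𝒳 → 𝒰 → ℝ) (t : ℕ) (ν : 𝒳 → ℝ) :
    Matrix 𝒳 𝒳 ℝ :=
  fun x => π t x ᵥ* fun u => P x u ν

theorem policyMatrix_mem_simplex (hP : IsKernel P) (hπ : IsPolicy π) (hν : ν ∈ subProb 𝒳)
    (x : 𝒳) : policyMatrix P π t ν x ∈ simplex 𝒳 :=
  vecMul_mem_simplex (hπ t x) fun u => hP x u ν hν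

theorem l1dist_policyMatrix_le (hPL : KernelLipschitz P L) (hπ : IsPolicy π)
    (hν : ν ∈ subProb 𝒳) (hν' : ν' ∈ subProb 𝒳) (x : 𝒳) :
    l1dist (policyMatrix P π t ν x) (policyMatrix P π t ν' x) ≤ L * l1dist ν ν' :=
  l1dist_vecMul_le (hπ t x) fun u => hPL x u ν ν' hν hν'

theorem stateLaw_succ (P : 𝒳 → 𝒰 → (𝒳 → ℝ) → 𝒳 → ℝ) (μ0 : 𝒳 → ℝ) (G : ℕ → 𝒳 → ℝ)
    (π : ℕ → 𝒳 → 𝒰 → ℝ) (t : ℕ) :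
    stateLaw P μ0 G π (t + 1) = stateLaw P μ0 G π t ᵥ* policyMatrix P π t (G t) :=
  rfl

theorem stateLaw_mem_simplex (hP : IsKernel P) (hμ0 : μ0 ∈ simplex 𝒳) {G : ℕ → 𝒳 → ℝ}
    (hG : ∀ s, G s ∈ subProb 𝒳) (hπ : IsPolicy π) (t : ℕ) :
    stateLaw P μ0 G π t ∈ simplex 𝒳 := by
  induction t with
  | zero => exact hμ0
  | succ t ih => exact vecMul_mem_simplex ih (policyMatrix_mem_simplex hP hπ (hG t))

variable {N : ℕ} {ξ : Fin N → Fin N → ℝ}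

/-- The expected neighborhood of agent `i` in a graph with weights `ξ` when agent `j` has
law `m j`. -/
noncomputable def graphNbhd (ξ : Fin N → Fin N → ℝ) (m : Fin N → 𝒳 → ℝ) (i : Fin N) : 𝒳 → ℝ :=
  fun x => (N : ℝ)⁻¹ * ∑ j, ξ i j * m j x

theorem graphNbhd_mem_subProb (hξ : ∀ i j, ξ i j ∈ Set.Icc (0 : ℝ) 1) {m : Fin N → 𝒳 → ℝ}
    (hm : ∀ j, m j ∈ subProb 𝒳) (i : Fin N) : graphNbhd ξ m i ∈ subProb 𝒳 := by
  have hterm (j : Fin N) := smul_mem_subProb (hξ i j) (hm j)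
  refine ⟨fun x => mul_nonneg (by positivity) (Finset.sum_nonneg fun j _ => (hterm j).1 x), ?_⟩
  simp only [graphNbhd]
  rw [← Finset.mul_sum, Finset.sum_comm]
  exact inv_mul_sum_le zero_le_one fun j => (hterm j).2

theorem l1dist_graphNbhd_le (hξ : ∀ i j, ξ i j ∈ Set.Icc (0 : ℝ) 1) (m m' : Fin N → 𝒳 → ℝ)
    (i : Fin N) :
    l1dist (graphNbhd ξ m i) (graphNbhd ξ m' i) ≤ (N : ℝ)⁻¹ * ∑ j, l1dist (m j) (m' j) := calc
  l1dist (graphNbhd ξ m i) (graphNbhd ξ m' i)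
      ≤ ∑ x, (N : ℝ)⁻¹ * ∑ j, |m j x - m' j x| := Finset.sum_le_sum fun x _ => by
        rw [graphNbhd, graphNbhd, ← mul_sub, ← Finset.sum_sub_distrib, abs_mul,
          abs_of_nonneg (by positivity : (0 : ℝ) ≤ (N : ℝ)⁻¹)]
        gcongr
        refine (Finset.abs_sum_le_sum_abs _ _).trans (Finset.sum_le_sum fun j _ => ?_)
        rw [← mul_sub, abs_mul, abs_of_nonneg (hξ i j).1]
        exact mul_le_of_le_one_left (abs_nonneg _) (hξ i j).2
  _ = (N : ℝ)⁻¹ * ∑ j, l1dist (m j) (m' j) := by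
        rw [← Finset.mul_sum, Finset.sum_comm]; rfl

theorem l1dist_graphNbhd_le_of_forall_ne (hξ : ∀ i j, ξ i j ∈ Set.Icc (0 : ℝ) 1)
    {m m' : Fin N → 𝒳 → ℝ} {k : Fin N} (hk : m k ∈ subProb 𝒳) (hk' : m' k ∈ subProb 𝒳)
    (hmm' : ∀ j ≠ k, m j = m' j) (i : Fin N) :
    l1dist (graphNbhd ξ m i) (graphNbhd ξ m' i) ≤ 2 / N := by
  refine (l1dist_graphNbhd_le hξ m m' i).trans ?_
  rw [Finset.sum_eq_single k (fun j _ hj => by simp [l1dist, hmm' j hj]) (by simp),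
    ← div_eq_inv_mul]
  gcongr
  exact l1dist_le_two hk hk'

/-- The `L¹` error at time `s` of the prescribed neighborhood `G j` of agent `j`, when each agent
evolves independently in its own prescribed neighborhood. -/
noncomputable def nbhdError (P : 𝒳 → 𝒰 → (𝒳 → ℝ) → 𝒳 → ℝ) (μ0 : 𝒳 → ℝ) (ξ : Fin N → Fin N → ℝ)
    (πs : Fin N → ℕ → 𝒳 → 𝒰 → ℝ) (G : Fin N → ℕ → 𝒳 → ℝ) (s : ℕ) (j : Fin N) : ℝ :=
  l1dist (graphNbhd ξ (fun k => stateLaw P μ0 (G k) (πs k) s) j) (G j s)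

theorem nbhdError_update_le (hP : IsKernel P) (hμ0 : μ0 ∈ simplex 𝒳)
    {πs : Fin N → ℕ → 𝒳 → 𝒰 → ℝ} (hπs : ∀ j, IsPolicy (πs j)) {G : Fin N → ℕ → 𝒳 → ℝ}
    (hG : ∀ j s, G j s ∈ subProb 𝒳) (hξ : ∀ i j, ξ i j ∈ Set.Icc (0 : ℝ) 1) (hπ : IsPolicy π)
    (i : Fin N) (s : ℕ) (j : Fin N) :
    nbhdError P μ0 ξ (Function.update πs i π) G s j ≤ 2 / N + nbhdError P μ0 ξ πs G s j := by
  refine (l1dist_triangle _ (graphNbhd ξ (fun k => stateLaw P μ0 (G k) (πs k) s) j) _).trans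
    (add_le_add_left (l1dist_graphNbhd_le_of_forall_ne hξ (k := i) ?_ ?_ ?_ j) _)
  · rw [Function.update_self]
    exact simplex_subset_subProb (stateLaw_mem_simplex hP hμ0 (hG i) hπ s)
  · exact simplex_subset_subProb (stateLaw_mem_simplex hP hμ0 (hG i) (hπs i) s)
  · intro k hk
    rw [Function.update_of_ne hk]

variable [DecidableEq 𝒳]

theorem empNbhd_eq_graphNbhd (ξ : Fin N → Fin N → ℝ) (X : Fin N → 𝒳) :
    empNbhd ξ X = graphNbhd ξ fun j x => if X j = x then 1 else 0 :=
  rfl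

theorem empNbhd_mem_subProb (hξ : ∀ i j, ξ i j ∈ Set.Icc (0 : ℝ) 1) (X : Fin N → 𝒳) (i : Fin N) :
    empNbhd ξ X i ∈ subProb 𝒳 := by
  rw [empNbhd_eq_graphNbhd]
  exact graphNbhd_mem_subProb hξ (fun j => ⟨fun x => by split_ifs <;> norm_num, by simp⟩) i

theorem empNbhd_sub_graphNbhd (ξ : Fin N → Fin N → ℝ) (m : Fin N → 𝒳 → ℝ) (X : Fin N → 𝒳)
    (i : Fin N) (x : 𝒳) :
    empNbhd ξ X i x - graphNbhd ξ m i x = fluctuation m (fun j => Pi.single x (ξ i j)) X := by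
  simp only [empNbhd, graphNbhd, fluctuation, ← mul_sub, ← Finset.sum_sub_distrib,
    dotProduct_single, Pi.single_apply, mul_ite, mul_one, mul_zero, mul_comm]

theorem HasFluctuationBound.dotProduct_l1dist_empNbhd_le {q : (Fin N → 𝒳) → ℝ}
    {m : Fin N → 𝒳 → ℝ} (h : HasFluctuationBound q m δ) (hq : q ∈ simplex (Fin N → 𝒳))
    (hξ : ∀ i j, ξ i j ∈ Set.Icc (0 : ℝ) 1) (i : Fin N) (ν : 𝒳 → ℝ) :
    (q ⬝ᵥ fun X => l1dist (empNbhd ξ X i) ν)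
      ≤ Fintype.card 𝒳 * δ + l1dist (graphNbhd ξ m i) ν := by
  have hempirical :
      (q ⬝ᵥ fun X => l1dist (empNbhd ξ X i) (graphNbhd ξ m i)) ≤ Fintype.card 𝒳 * δ := calc
    (q ⬝ᵥ fun X => l1dist (empNbhd ξ X i) (graphNbhd ξ m i))
      = ∑ x, q ⬝ᵥ fun X => |fluctuation m (fun j => Pi.single x (ξ i j)) X| := by
        rw [← dotProduct_sum]
        congr 1
        ext X
        simp only [l1dist, empNbhd_sub_graphNbhd, Finset.sum_apply]
    _ ≤ ∑ _x : 𝒳, δ := Finset.sum_le_sum fun x _ => h _ fun j ω => by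
        rw [Pi.single_apply]
        split_ifs
        · exact abs_le.2 ⟨by linarith [(hξ i j).1], (hξ i j).2⟩
        · simp
    _ = Fintype.card 𝒳 * δ := by simp
  calc (q ⬝ᵥ fun X => l1dist (empNbhd ξ X i) ν)
      ≤ q ⬝ᵥ ((fun X => l1dist (empNbhd ξ X i) (graphNbhd ξ m i))
          + fun _ => l1dist (graphNbhd ξ m i) ν) :=
        dotProduct_le_dotProduct_of_nonneg_left (fun X => l1dist_triangle _ _ _) hq.1
    _ ≤ Fintype.card 𝒳 * δ + l1dist (graphNbhd ξ m i) ν := by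
        rw [dotProduct_add, dotProduct_const_of_mem_simplex hq]
        gcongr

/-- The transition matrix at time `t` of the state of the `N`-agent system. -/
noncomputable def jointMatrix (P : 𝒳 → 𝒰 → (𝒳 → ℝ) → 𝒳 → ℝ) (ξ : Fin N → Fin N → ℝ)
    (πs : Fin N → ℕ → 𝒳 → 𝒰 → ℝ) (t : ℕ) : Matrix (Fin N → 𝒳) (Fin N → 𝒳) ℝ :=
  fun X => prodLaw fun i => policyMatrix P (πs i) t (empNbhd ξ X i) (X i)

variable {πs : Fin N → ℕ → 𝒳 → 𝒰 → ℝ}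

theorem jointLaw_succ (P : 𝒳 → 𝒰 → (𝒳 → ℝ) → 𝒳 → ℝ) (μ0 : 𝒳 → ℝ) (ξ : Fin N → Fin N → ℝ)
    (πs : Fin N → ℕ → 𝒳 → 𝒰 → ℝ) (t : ℕ) :
    jointLaw P μ0 ξ πs (t + 1) = jointLaw P μ0 ξ πs t ᵥ* jointMatrix P ξ πs t :=
  rfl

theorem jointMatrix_mem_simplex (hP : IsKernel P) (hξ : ∀ i j, ξ i j ∈ Set.Icc (0 : ℝ) 1)
    (hπs : ∀ j, IsPolicy (πs j)) (t : ℕ) (X : Fin N → 𝒳) :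
    jointMatrix P ξ πs t X ∈ simplex (Fin N → 𝒳) :=
  prodLaw_mem_simplex fun j =>
    policyMatrix_mem_simplex hP (hπs j) (empNbhd_mem_subProb hξ X j) (X j)

theorem jointLaw_mem_simplex (hP : IsKernel P) (hμ0 : μ0 ∈ simplex 𝒳)
    (hξ : ∀ i j, ξ i j ∈ Set.Icc (0 : ℝ) 1) (hπs : ∀ j, IsPolicy (πs j)) (t : ℕ) :
    jointLaw P μ0 ξ πs t ∈ simplex (Fin N → 𝒳) := by
  induction t with
  | zero => exact prodLaw_mem_simplex fun _ => hμ0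
  | succ t ih => exact vecMul_mem_simplex ih (jointMatrix_mem_simplex hP hξ hπs t)

theorem HasFluctuationBound.vecMul_jointMatrix {q : (Fin N → 𝒳) → ℝ} {m G : Fin N → 𝒳 → ℝ}
    (h : HasFluctuationBound q m δ) (hq : q ∈ simplex (Fin N → 𝒳)) (hP : IsKernel P)
    (hL : 0 ≤ L) (hPL : KernelLipschitz P L) (hξ : ∀ i j, ξ i j ∈ Set.Icc (0 : ℝ) 1)
    (hπs : ∀ j, IsPolicy (πs j)) (hG : ∀ j, G j ∈ subProb 𝒳) (t : ℕ) :
    HasFluctuationBound (q ᵥ* jointMatrix P ξ πs t)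
      (fun j => m j ᵥ* policyMatrix P (πs j) t (G j))
      ((1 + L * Fintype.card 𝒳) * δ
        + L * ((N : ℝ)⁻¹ * ∑ j, l1dist (graphNbhd ξ m j) (G j)) + (√N)⁻¹) := by
  intro a ha
  set A : Fin N → Matrix 𝒳 𝒳 ℝ := fun j => policyMatrix P (πs j) t (G j)
  set b : Fin N → 𝒳 → ℝ := fun j => A j *ᵥ a j
  have hb (j : Fin N) (x : 𝒳) : |b j x| ≤ 1 :=
    abs_dotProduct_le_of_mem_simplex (policyMatrix_mem_simplex hP (hπs j) (hG j) x) (ha j)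
  have hconditional (X : Fin N → 𝒳) :
      (jointMatrix P ξ πs t *ᵥ fun Y => |fluctuation (fun j => m j ᵥ* A j) a Y|) X
        ≤ (√N)⁻¹ + (N : ℝ)⁻¹ * ∑ j, L * l1dist (empNbhd ξ X j) (G j) + |fluctuation m b X| := by
    refine (prodLaw_dotProduct_abs_fluctuation_vecMul_le
      (fun j => policyMatrix_mem_simplex hP (hπs j) (empNbhd_mem_subProb hξ X j) (X j))
      m A X ha).trans ?_
    gcongr with j
    exact l1dist_policyMatrix_le hPL (hπs j) (empNbhd_mem_subProb hξ X j) (hG j) (X j)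
  calc q ᵥ* jointMatrix P ξ πs t ⬝ᵥ (fun Y => |fluctuation (fun j => m j ᵥ* A j) a Y|)
      ≤ q ⬝ᵥ ((fun _ => (√N)⁻¹)
          + ((N : ℝ)⁻¹ * L) • ∑ j, (fun X => l1dist (empNbhd ξ X j) (G j))
          + fun X => |fluctuation m b X|) := by
        rw [← Matrix.dotProduct_mulVec]
        refine dotProduct_le_dotProduct_of_nonneg_left (fun X => ?_) hq.1
        simpa only [Pi.add_apply, Pi.smul_apply, Finset.sum_apply, smul_eq_mul, mul_assoc,
          Finset.mul_sum] using hconditional X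
    _ ≤ (√N)⁻¹ + (N : ℝ)⁻¹ * L *
          ∑ j, (Fintype.card 𝒳 * δ + l1dist (graphNbhd ξ m j) (G j)) + δ := by
        rw [dotProduct_add, dotProduct_add, dotProduct_smul, dotProduct_sum,
          dotProduct_const_of_mem_simplex hq, smul_eq_mul]
        gcongr with j
        · exact h.dotProduct_l1dist_empNbhd_le hq hξ j (G j)
        · exact h b hb
    _ ≤ (1 + L * Fintype.card 𝒳) * δ
          + L * ((N : ℝ)⁻¹ * ∑ j, l1dist (graphNbhd ξ m j) (G j)) + (√N)⁻¹ := by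
        have hδ : (N : ℝ)⁻¹ * ∑ _j : Fin N, Fintype.card 𝒳 * δ ≤ Fintype.card 𝒳 * δ :=
          inv_mul_sum_le (mul_nonneg (Nat.cast_nonneg _) (h.nonneg hq.1)) fun _ => le_rfl
        rw [Finset.sum_add_distrib]
        linarith [mul_le_mul_of_nonneg_left hδ hL]

/-- The `L¹` rate for the fluctuations of the population at time `t`, when agents that would be
independent fluctuate by `η`, transitions are `L`-Lipschitz on `c` states, and `A s` is the
average error of the neighborhoods used at time `s`. -/
def fluctuationRate (L c η : ℝ) (A : ℕ → ℝ) : ℕ → ℝ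
  | 0 => η
  | t + 1 => (1 + L * c) * fluctuationRate L c η A t + L * A t + η

theorem tendsto_fluctuationRate {α : Type*} {l : Filter α} (L c : ℝ) {η : α → ℝ}
    {A : α → ℕ → ℝ} (hη : Tendsto η l (𝓝 0)) (hA : ∀ t, Tendsto (A · t) l (𝓝 0)) (t : ℕ) :
    Tendsto (fun n => fluctuationRate L c (η n) (A n) t) l (𝓝 0) := by
  induction t with
  | zero => exact hη
  | succ t ih =>
    simpa only [mul_zero, add_zero, fluctuationRate] using
      ((ih.const_mul (1 + L * c)).add ((hA t).const_mul L)).add hη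

theorem tendsto_sum_fluctuationRate (L c : ℝ) {A : ℕ → ℕ → ℝ}
    (hA : ∀ s, Tendsto (A · s) atTop (𝓝 0)) (t : ℕ) :
    Tendsto (fun N : ℕ => ∑ s ∈ Finset.range t,
      (c * fluctuationRate L c (√N)⁻¹ (fun s => 2 / N + A N s) s + 2 / N)) atTop (𝓝 0) := by
  have hinv : Tendsto (fun N : ℕ => 2 / (N : ℝ)) atTop (𝓝 0) :=
    tendsto_natCast_atTop_atTop.const_div_atTop 2
  have hsqrt : Tendsto (fun N : ℕ => (√N)⁻¹) atTop (𝓝 0) :=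
    (Real.tendsto_sqrt_atTop.comp tendsto_natCast_atTop_atTop).inv_tendsto_atTop
  have hrate := tendsto_fluctuationRate L c hsqrt
    fun s => by simpa only [add_zero] using hinv.add (hA s)
  simpa only [mul_zero, add_zero, Finset.sum_const_zero] using
    tendsto_finsetSum (Finset.range t) fun s _ => ((hrate s).const_mul c).add hinv

theorem hasFluctuationBound_jointLaw (hP : IsKernel P) (hL : 0 ≤ L) (hPL : KernelLipschitz P L)
    (hμ0 : μ0 ∈ simplex 𝒳) (hξ : ∀ i j, ξ i j ∈ Set.Icc (0 : ℝ) 1)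
    (hπs : ∀ j, IsPolicy (πs j)) {G : Fin N → ℕ → 𝒳 → ℝ} (hG : ∀ j s, G j s ∈ subProb 𝒳)
    {A : ℕ → ℝ} (hA : ∀ s, (N : ℝ)⁻¹ * ∑ j, nbhdError P μ0 ξ πs G s j ≤ A s) (t : ℕ) :
    HasFluctuationBound (jointLaw P μ0 ξ πs t) (fun j => stateLaw P μ0 (G j) (πs j) t)
      (fluctuationRate L (Fintype.card 𝒳) (√N)⁻¹ A t) := by
  induction t with
  | zero => exact hasFluctuationBound_prodLaw fun _ => hμ0
  | succ t ih =>
    intro a ha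
    refine (ih.vecMul_jointMatrix (jointLaw_mem_simplex hP hμ0 hξ hπs t) hP hL hPL hξ hπs
      (hG · t) t a ha).trans ?_
    rw [fluctuationRate]
    gcongr
    exact hA t

theorem abs_jointMatrix_mulVec_sub_policyMatrix_mulVec_le (hP : IsKernel P)
    (hPL : KernelLipschitz P L) (hξ : ∀ i j, ξ i j ∈ Set.Icc (0 : ℝ) 1)
    (hπs : ∀ j, IsPolicy (πs j)) (hν : ν ∈ subProb 𝒳) {g : 𝒳 → ℝ} {C : ℝ} (hC : 0 ≤ C)
    (hg : ∀ x, |g x| ≤ C) (i : Fin N) (X : Fin N → 𝒳) :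
    |(jointMatrix P ξ πs t *ᵥ fun Y => g (Y i)) X - (policyMatrix P (πs i) t ν *ᵥ g) (X i)|
      ≤ C * L * l1dist (empNbhd ξ X i) ν := by
  have hmarginal : (jointMatrix P ξ πs t *ᵥ fun Y => g (Y i)) X
      = policyMatrix P (πs i) t (empNbhd ξ X i) (X i) ⬝ᵥ g :=
    prodLaw_dotProduct_eval (fun j =>
      policyMatrix_mem_simplex hP (hπs j) (empNbhd_mem_subProb hξ X j) (X j)) i g
  rw [hmarginal, mul_assoc]
  refine (abs_dotProduct_sub_le_mul_l1dist _ _ hg).trans ?_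
  gcongr
  exact l1dist_policyMatrix_le hPL (hπs i) (empNbhd_mem_subProb hξ X i) hν (X i)

theorem abs_jointLaw_dotProduct_eval_sub_stateLaw_le (hP : IsKernel P) (hL : 0 ≤ L)
    (hPL : KernelLipschitz P L) (hμ0 : μ0 ∈ simplex 𝒳)
    (hξ : ∀ i j, ξ i j ∈ Set.Icc (0 : ℝ) 1) (hπs : ∀ j, IsPolicy (πs j))
    {m : ℕ → Fin N → 𝒳 → ℝ} {δ : ℕ → ℝ}
    (hm : ∀ s, HasFluctuationBound (jointLaw P μ0 ξ πs s) (m s) (δ s))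
    {G : ℕ → 𝒳 → ℝ} (hG : ∀ s, G s ∈ subProb 𝒳) (i : Fin N) {C : ℝ} (hC : 0 ≤ C) (t : ℕ)
    {g : 𝒳 → ℝ} (hg : ∀ x, |g x| ≤ C) :
    |(jointLaw P μ0 ξ πs t ⬝ᵥ fun X => g (X i)) - stateLaw P μ0 G (πs i) t ⬝ᵥ g|
      ≤ C * L * ∑ s ∈ Finset.range t,
          (Fintype.card 𝒳 * δ s + l1dist (graphNbhd ξ (m s) i) (G s)) := by
  induction t generalizing g with
  | zero =>
    have hinit : (jointLaw P μ0 ξ πs 0 ⬝ᵥ fun X => g (X i)) = μ0 ⬝ᵥ g :=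
      prodLaw_dotProduct_eval (fun _ => hμ0) i g
    rw [hinit]
    simp [stateLaw]
  | succ t ih =>
    have hq := jointLaw_mem_simplex hP hμ0 hξ hπs t
    set q := jointLaw P μ0 ξ πs t
    set b : 𝒳 → ℝ := policyMatrix P (πs i) t (G t) *ᵥ g
    have hlocal : |q ⬝ᵥ (jointMatrix P ξ πs t *ᵥ fun Y => g (Y i)) - q ⬝ᵥ fun X => b (X i)|
        ≤ C * L * (Fintype.card 𝒳 * δ t + l1dist (graphNbhd ξ (m t) i) (G t)) := calc
      _ ≤ q ⬝ᵥ (C * L) • fun X => l1dist (empNbhd ξ X i) (G t) := by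
        rw [← dotProduct_sub]
        refine (abs_dotProduct_le_dotProduct_abs hq.1 _).trans
          (dotProduct_le_dotProduct_of_nonneg_left (fun X => ?_) hq.1)
        exact abs_jointMatrix_mulVec_sub_policyMatrix_mulVec_le hP hPL hξ hπs (hG t) hC hg i X
      _ ≤ _ := by
        rw [dotProduct_smul, smul_eq_mul]
        gcongr
        exact (hm t).dotProduct_l1dist_empNbhd_le hq hξ i (G t)
    have hprevious := ih (g := b) fun x =>
      abs_dotProduct_le_of_mem_simplex (policyMatrix_mem_simplex hP (hπs i) (hG t) x) hg
    rw [jointLaw_succ, stateLaw_succ, ← Matrix.dotProduct_mulVec, ← Matrix.dotProduct_mulVec,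
      Finset.sum_range_succ, mul_add, add_comm (C * L * _)]
    exact (abs_sub_le _ _ _).trans (add_le_add hlocal hprevious)

theorem abs_jointLaw_update_sub_stateLaw_le (hP : IsKernel P) (hL : 0 ≤ L)
    (hPL : KernelLipschitz P L) (hμ0 : μ0 ∈ simplex 𝒳)
    (hξ : ∀ i j, ξ i j ∈ Set.Icc (0 : ℝ) 1) (hπs : ∀ j, IsPolicy (πs j))
    {G : Fin N → ℕ → 𝒳 → ℝ} (hG : ∀ j s, G j s ∈ subProb 𝒳) (hπ : IsPolicy π) (i : Fin N)
    {C : ℝ} (hC : 0 ≤ C) (t : ℕ) {g : 𝒳 → ℝ} (hg : ∀ x, |g x| ≤ C) :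
    |(jointLaw P μ0 ξ (Function.update πs i π) t ⬝ᵥ fun X => g (X i))
        - stateLaw P μ0 (G i) π t ⬝ᵥ g|
      ≤ C * L * (∑ s ∈ Finset.range t, (Fintype.card 𝒳 * fluctuationRate L (Fintype.card 𝒳) (√N)⁻¹
          (fun s => 2 / N + (N : ℝ)⁻¹ * ∑ j, nbhdError P μ0 ξ πs G s j) s + 2 / N)
        + ∑ s ∈ Finset.range t, nbhdError P μ0 ξ πs G s i) := by
  have hupdate : ∀ j, IsPolicy (Function.update πs i π j) :=
    Function.forall_update_iff _ (fun _ => IsPolicy) |>.2 ⟨hπ, fun j _ => hπs j⟩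
  have herror := nbhdError_update_le hP hμ0 hπs hG hξ hπ i
  have haverage (s : ℕ) : (N : ℝ)⁻¹ * ∑ j, nbhdError P μ0 ξ (Function.update πs i π) G s j
      ≤ 2 / N + (N : ℝ)⁻¹ * ∑ j, nbhdError P μ0 ξ πs G s j := by
    refine (mul_le_mul_of_nonneg_left (Finset.sum_le_sum fun j _ => herror s j)
      (by positivity)).trans ?_
    rw [Finset.sum_add_distrib, mul_add]
    gcongr
    exact inv_mul_sum_le (by positivity) fun _ => le_rfl
  have hbound := abs_jointLaw_dotProduct_eval_sub_stateLaw_le hP hL hPL hμ0 hξ hupdate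
    (hasFluctuationBound_jointLaw hP hL hPL hμ0 hξ hupdate hG haverage) (hG i) i hC t hg
  rw [Function.update_self] at hbound
  refine hbound.trans (mul_le_mul_of_nonneg_left ?_ (mul_nonneg hC hL))
  rw [← Finset.sum_add_distrib]
  exact Finset.sum_le_sum fun s _ => by
    rw [add_assoc]
    exact add_le_add_right (herror s i) _

end Population

section UnitInterval

variable {f : ℝ → ℝ} {C : ℝ}

theorem integrableOn_unit_of_abs_le (hf : Measurable f)
    (hC : ∀ β ∈ Set.Ioc (0 : ℝ) 1, |f β| ≤ C) : IntegrableOn f (Set.Ioc 0 1) :=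
  IntegrableOn.of_bound measure_Ioc_lt_top hf.aestronglyMeasurable C
    (ae_restrict_of_forall_mem measurableSet_Ioc hC)

theorem abs_setIntegral_unit_le (hC : ∀ β ∈ Set.Ioc (0 : ℝ) 1, |f β| ≤ C) :
    |∫ β in Set.Ioc (0 : ℝ) 1, f β| ≤ C := by
  simpa using norm_setIntegral_le_of_norm_le_const (f := f) (μ := volume) measure_Ioc_lt_top hC

/-- `f` is continuous on `[0,1]` at almost every point; for bounded `f` this is Lebesgue's
criterion for Riemann integrability. -/
def AEContinuousOnUnit (f : ℝ → ℝ) : Prop :=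
  ∀ᵐ α ∂volume.restrict (Set.Ioc (0 : ℝ) 1), ContinuousWithinAt f (Set.Icc 0 1) α

/-- The right endpoint of the block `(j/N, (j+1)/N]` containing `β`; this is the graphon index
of the agent that represents `β`. -/
noncomputable def gridRound (N : ℕ) (β : ℝ) : ℝ := ⌈β * N⌉₊ / N

theorem measurable_gridRound (N : ℕ) : Measurable (gridRound N) := by
  unfold gridRound
  fun_prop

theorem gridRound_mem_Icc (N : ℕ) {β : ℝ} (hβ : β ≤ 1) : gridRound N β ∈ Set.Icc (0 : ℝ) 1 := by
  refine ⟨by unfold gridRound; positivity, div_le_one_of_le₀ ?_ N.cast_nonneg⟩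
  have hceil : ⌈β * N⌉₊ ≤ N := Nat.ceil_le.2 (mul_le_of_le_one_left N.cast_nonneg hβ)
  exact_mod_cast hceil

theorem tendsto_gridRound {β : ℝ} (hβ : β ∈ Set.Icc (0 : ℝ) 1) :
    Tendsto (gridRound · β) atTop (𝓝[Set.Icc 0 1] β) :=
  tendsto_nhdsWithin_iff.2
    ⟨(tendsto_nat_ceil_mul_div_atTop hβ.1).comp tendsto_natCast_atTop_atTop,
      .of_forall fun N => gridRound_mem_Icc N hβ.2⟩

theorem AEContinuousOnUnit.tendsto_integral_abs_comp_gridRound_sub (hfc : AEContinuousOnUnit f)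
    (hf : Measurable f) (hC : ∀ β ∈ Set.Icc (0 : ℝ) 1, |f β| ≤ C) :
    Tendsto (fun N => ∫ β in Set.Ioc (0 : ℝ) 1, |f (gridRound N β) - f β|) atTop (𝓝 0) := by
  suffices Tendsto (fun N => ∫ β in Set.Ioc (0 : ℝ) 1, |f (gridRound N β) - f β|) atTop
      (𝓝 (∫ _ in Set.Ioc (0 : ℝ) 1, 0)) by simpa only [integral_zero] using this
  refine tendsto_integral_of_dominated_convergence (fun _ => C + C) (fun N => ?_) ?_
    (fun N => ?_) ?_
  · exact ((hf.comp (measurable_gridRound N)).sub hf).abs.aestronglyMeasurable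
  · exact integrable_const _
  · refine ae_restrict_of_forall_mem measurableSet_Ioc fun β hβ => ?_
    rw [Real.norm_eq_abs, abs_abs]
    exact (abs_sub _ _).trans
      (add_le_add (hC _ (gridRound_mem_Icc N hβ.2)) (hC β (Set.Ioc_subset_Icc_self hβ)))
  · filter_upwards [hfc, ae_restrict_mem measurableSet_Ioc] with β hcont hβ
    simpa only [Function.comp_def, sub_self, abs_zero] using
      ((hcont.tendsto.comp (tendsto_gridRound (Set.Ioc_subset_Icc_self hβ))).sub_const (f β)).abs

variable {N : ℕ}

theorem ceil_mul_eq_iff (hN : N ≠ 0) (j : ℕ) (β : ℝ) :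
    ⌈β * N⌉₊ = j + 1 ↔ (j : ℝ) / N < β ∧ β ≤ ((j : ℝ) + 1) / N := by
  have hN' : (0 : ℝ) < N := by positivity
  rw [Nat.ceil_eq_iff j.succ_ne_zero, div_lt_iff₀ hN', le_div_iff₀ hN']
  simp

theorem gridRound_eq_rep (hN : N ≠ 0) {j : Fin N} {β : ℝ}
    (hβ : β ∈ Set.Ioc ((j : ℝ) / N) (((j : ℝ) + 1) / N)) : gridRound N β = rep N j := by
  rw [gridRound, rep, (ceil_mul_eq_iff hN j β).2 hβ, Nat.cast_succ]

theorem ceil_rep_mul (hN : N ≠ 0) (j : Fin N) : ⌈rep N j * N⌉₊ = j + 1 := by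
  have hN' : (N : ℝ) ≠ 0 := by positivity
  rw [rep, div_mul_cancel₀ _ hN']
  exact_mod_cast Nat.ceil_natCast ((j : ℕ) + 1)

theorem ceil_gridRound_mul (hN : N ≠ 0) (β : ℝ) : ⌈gridRound N β * N⌉₊ = ⌈β * N⌉₊ := by
  have hN' : (N : ℝ) ≠ 0 := by positivity
  rw [gridRound, div_mul_cancel₀ _ hN', Nat.ceil_natCast]

theorem rep_mem_Icc (j : Fin N) : rep N j ∈ Set.Icc (0 : ℝ) 1 := by
  refine ⟨by unfold rep; positivity, div_le_one_of_le₀ ?_ N.cast_nonneg⟩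
  exact_mod_cast j.is_lt

theorem integral_comp_gridRound (hN : N ≠ 0) (h : ℝ → ℝ) :
    ∫ β in Set.Ioc (0 : ℝ) 1, h (gridRound N β) = (N : ℝ)⁻¹ * ∑ j : Fin N, h (rep N j) := by
  have hblock (j : ℕ) (hj : j < N) : Set.EqOn (fun _ => h (rep N ⟨j, hj⟩))
      (fun β => h (gridRound N β)) (Set.uIoc ((j : ℝ) / N) (((j + 1 : ℕ) : ℝ) / N)) := by
    intro β hβ
    rw [Set.uIoc_of_le (by gcongr; simp), Nat.cast_succ] at hβ
    exact congrArg h (gridRound_eq_rep hN (j := ⟨j, hj⟩) hβ).symm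
  calc ∫ β in Set.Ioc (0 : ℝ) 1, h (gridRound N β)
      = ∑ j ∈ Finset.range N,
          ∫ β in ((j : ℝ) / N)..(((j + 1 : ℕ) : ℝ) / N), h (gridRound N β) := by
        rw [intervalIntegral.sum_integral_adjacent_intervals (a := fun j : ℕ => (j : ℝ) / N)
          fun j hj => intervalIntegrable_const.congr (hblock j hj)]
        simp only [Nat.cast_zero, zero_div, div_self (Nat.cast_ne_zero.2 hN : (N : ℝ) ≠ 0),
          intervalIntegral.integral_of_le zero_le_one]
    _ = ∑ j : Fin N, ∫ _ in ((j : ℝ) / N)..(((j + 1 : ℕ) : ℝ) / N), h (rep N j) := by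
        rw [Finset.sum_range]
        exact Finset.sum_congr rfl fun j _ =>
          (intervalIntegral.integral_congr_ae (.of_forall (hblock j j.is_lt))).symm
    _ = (N : ℝ)⁻¹ * ∑ j : Fin N, h (rep N j) := by
        simp only [intervalIntegral.integral_const, smul_eq_mul, Finset.mul_sum, ← sub_div,
          Nat.cast_succ, add_sub_cancel_left, one_div]

end UnitInterval

section Graphon

variable {N : ℕ} {W : ℝ → ℝ → ℝ} {f : ℝ → ℝ}

theorem stepGraphon_eq_sum_ceil (hN : N ≠ 0) (ξ : Fin N → Fin N → ℝ) (α β : ℝ) :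
    stepGraphon ξ α β = ∑ i : Fin N, ∑ j : Fin N,
      (if ⌈α * N⌉₊ = i + 1 then 1 else 0) * (if ⌈β * N⌉₊ = j + 1 then 1 else 0) * ξ i j := by
  simp only [stepGraphon, ceil_mul_eq_iff hN]

theorem stepGraphon_gridRound_gridRound (hN : N ≠ 0) (ξ : Fin N → Fin N → ℝ) (α β : ℝ) :
    stepGraphon ξ (gridRound N α) (gridRound N β) = stepGraphon ξ α β := by
  simp only [stepGraphon_eq_sum_ceil hN, ceil_gridRound_mul hN]

theorem stepGraphon_rep_rep (hN : N ≠ 0) (ξ : Fin N → Fin N → ℝ) (i j : Fin N) :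
    stepGraphon ξ (rep N i) (rep N j) = ξ i j := by
  simp [stepGraphon_eq_sum_ceil hN, ceil_rep_mul hN, Fin.val_inj]

theorem measurable_stepGraphon (ξ : Fin N → Fin N → ℝ) :
    Measurable (Function.uncurry (stepGraphon ξ)) := by
  have hblock (i : Fin N) : Measurable fun β : ℝ =>
      if (i : ℝ) / N < β ∧ β ≤ ((i : ℝ) + 1) / N then (1 : ℝ) else 0 :=
    Measurable.ite measurableSet_Ioc measurable_const measurable_const
  simp only [stepGraphon, Function.uncurry_def]
  exact Finset.measurable_fun_sum _ fun i _ => Finset.measurable_fun_sum _ fun j _ =>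
    (((hblock i).comp measurable_fst).mul ((hblock j).comp measurable_snd)).mul_const _

theorem abs_stepGraphon_le (ξ : Fin N → Fin N → ℝ) (α β : ℝ) :
    |stepGraphon ξ α β| ≤ ∑ i, ∑ j, |ξ i j| := by
  refine (Finset.abs_sum_le_sum_abs _ _).trans (Finset.sum_le_sum fun i _ =>
    (Finset.abs_sum_le_sum_abs _ _).trans (Finset.sum_le_sum fun j _ => ?_))
  split_ifs <;> simp

/-- The integral operator `f ↦ ∫₀¹ W(·,β) f(β) dβ` of a graphon. -/
noncomputable def graphonOp (W : ℝ → ℝ → ℝ) (f : ℝ → ℝ) (α : ℝ) : ℝ :=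
  ∫ β in Set.Ioc (0 : ℝ) 1, W α β * f β

/-- `W(·,β)` is continuous at `α` for almost all `α` and almost all `β`. Graphons that are
continuous on each cell of a finite grid qualify. -/
def GraphonAEContinuous (W : ℝ → ℝ → ℝ) : Prop :=
  ∀ᵐ α ∂volume.restrict (Set.Ioc (0 : ℝ) 1), ∀ᵐ β ∂volume.restrict (Set.Ioc (0 : ℝ) 1),
    ContinuousWithinAt (fun a => W a β) (Set.Icc 0 1) α

theorem measurable_graphonOp (hW : Measurable (Function.uncurry W)) (hf : Measurable f) :
    Measurable (graphonOp W f) :=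
  (StronglyMeasurable.integral_prod_right
    (hW.mul (hf.comp measurable_snd)).stronglyMeasurable).measurable

theorem abs_graphonOp_le {B : ℝ} (hW : ∀ α β, |W α β| ≤ B)
    (hf : ∀ β ∈ Set.Ioc (0 : ℝ) 1, |f β| ≤ 1) (α : ℝ) : |graphonOp W f α| ≤ B :=
  abs_setIntegral_unit_le fun β hβ => by
    rw [abs_mul]
    exact (mul_le_of_le_one_right (abs_nonneg _) (hf β hβ)).trans (hW α β)

theorem IsGraphon.abs_le_one (hW : IsGraphon W) (α β : ℝ) : |W α β| ≤ 1 :=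
  abs_le.2 ⟨by linarith [(hW.2.2 α β).1], (hW.2.2 α β).2⟩

theorem GraphonAEContinuous.aeContinuousOnUnit_graphonOp (hWc : GraphonAEContinuous W)
    (hW : IsGraphon W) (hf : Measurable f) (hf1 : ∀ β ∈ Set.Ioc (0 : ℝ) 1, |f β| ≤ 1) :
    AEContinuousOnUnit (graphonOp W f) := by
  filter_upwards [hWc] with α hα
  refine continuousWithinAt_of_dominated (bound := fun _ => 1)
    (.of_forall fun a => (hW.1.of_uncurry_left.mul hf).aestronglyMeasurable)
    (.of_forall fun a => ae_restrict_of_forall_mem measurableSet_Ioc fun β hβ => ?_)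
    (integrable_const _) (hα.mono fun β hβ => hβ.mul continuousWithinAt_const)
  rw [norm_mul]
  exact mul_le_one₀ (hW.abs_le_one a β) (norm_nonneg _) (hf1 β hβ)

theorem OpConvergesTo.tendsto_integral_abs_graphonOp_sub {WN : ℕ → ℝ → ℝ → ℝ}
    (hconv : OpConvergesTo WN W) {g : ℕ → ℝ → ℝ} (hg : ∀ N, Measurable (g N))
    (hg1 : ∀ N, ∀ β ∈ Set.Ioc (0 : ℝ) 1, |g N β| ≤ 1) :
    Tendsto (fun N => ∫ α in Set.Ioc (0 : ℝ) 1,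
      |graphonOp (fun α β => WN N α β - W α β) (g N) α|) atTop (𝓝 0) := by
  have hindicator (N : ℕ) (V : ℝ → ℝ → ℝ) (α : ℝ) :
      ∫ β in Set.Ioc (0 : ℝ) 1, V α β * (Set.Ioc (0 : ℝ) 1).indicator (g N) β
        = graphonOp V (g N) α :=
    setIntegral_congr_fun measurableSet_Ioc fun β hβ => by
      simp only [Set.indicator_of_mem hβ]
  rw [Metric.tendsto_atTop]
  intro ε hε
  obtain ⟨N₀, hN₀⟩ := hconv (ε / 2) (half_pos hε)
  refine ⟨N₀, fun N hN => ?_⟩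
  have hle := hN₀ N hN ((Set.Ioc (0 : ℝ) 1).indicator (g N)) ((hg N).indicator measurableSet_Ioc)
    fun β => by
      by_cases hβ : β ∈ Set.Ioc (0 : ℝ) 1
      · simpa only [Set.indicator_of_mem hβ] using hg1 N β hβ
      · simp [Set.indicator_of_notMem hβ]
  simp only [hindicator N fun α β => WN N α β - W α β] at hle
  rw [Real.dist_0_eq_abs, abs_of_nonneg (integral_nonneg fun _ => abs_nonneg _)]
  linarith

theorem graphonOp_sub_left {V : ℝ → ℝ → ℝ} {α : ℝ}
    (hV : IntegrableOn (fun β => V α β * f β) (Set.Ioc 0 1))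
    (hW : IntegrableOn (fun β => W α β * f β) (Set.Ioc 0 1)) :
    graphonOp (fun α β => V α β - W α β) f α = graphonOp V f α - graphonOp W f α := by
  simp only [graphonOp, sub_mul, integral_sub hV hW]

theorem integrableOn_mul_unit {B : ℝ} (hWm : Measurable (Function.uncurry W))
    (hWB : ∀ α β, |W α β| ≤ B) (hf : Measurable f) (hf1 : ∀ β ∈ Set.Ioc (0 : ℝ) 1, |f β| ≤ 1)
    (α : ℝ) : IntegrableOn (fun β => W α β * f β) (Set.Ioc 0 1) :=
  integrableOn_unit_of_abs_le (hWm.of_uncurry_left.mul hf) fun β hβ => by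
    rw [abs_mul]
    exact (mul_le_of_le_one_right (abs_nonneg _) (hf1 β hβ)).trans (hWB α β)

theorem integrableOn_graphonOp {B : ℝ} (hWm : Measurable (Function.uncurry W))
    (hWB : ∀ α β, |W α β| ≤ B) (hf : Measurable f) (hf1 : ∀ β ∈ Set.Ioc (0 : ℝ) 1, |f β| ≤ 1) :
    IntegrableOn (graphonOp W f) (Set.Ioc 0 1) :=
  integrableOn_unit_of_abs_le (measurable_graphonOp hWm hf) fun α _ => abs_graphonOp_le hWB hf1 α

theorem IsGraphon.abs_graphonOp_sub_graphonOp_le (hW : IsGraphon W) {f g : ℝ → ℝ}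
    (hf : Measurable f) (hf1 : ∀ β ∈ Set.Ioc (0 : ℝ) 1, |f β| ≤ 1) (hg : Measurable g)
    (hg1 : ∀ β ∈ Set.Ioc (0 : ℝ) 1, |g β| ≤ 1) (α : ℝ) :
    |graphonOp W f α - graphonOp W g α| ≤ ∫ β in Set.Ioc (0 : ℝ) 1, |f β - g β| := by
  have hWf := integrableOn_mul_unit hW.1 hW.abs_le_one hf hf1 α
  have hWg := integrableOn_mul_unit hW.1 hW.abs_le_one hg hg1 α
  have hfg : IntegrableOn (fun β => |f β - g β|) (Set.Ioc 0 1) :=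
    ((integrableOn_unit_of_abs_le hf hf1).sub (integrableOn_unit_of_abs_le hg hg1)).abs
  rw [graphonOp, graphonOp, ← integral_sub hWf hWg]
  refine abs_integral_le_integral_abs.trans (integral_mono (hWf.sub hWg).abs hfg fun β => ?_)
  rw [← mul_sub, abs_mul]
  exact mul_le_of_le_one_left (abs_nonneg _) (hW.abs_le_one α β)

theorem integral_abs_graphonOp_comp_gridRound_sub_le {V : ℝ → ℝ → ℝ}
    (hV : Measurable (Function.uncurry V)) {B : ℝ} (hVB : ∀ α β, |V α β| ≤ B) (hW : IsGraphon W)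
    (hf : Measurable f) (hf1 : ∀ β ∈ Set.Icc (0 : ℝ) 1, |f β| ≤ 1) (N : ℕ) :
    ∫ α in Set.Ioc (0 : ℝ) 1, |graphonOp V (f ∘ gridRound N) α - graphonOp W f (gridRound N α)| ≤
      (∫ α in Set.Ioc (0 : ℝ) 1, |graphonOp (fun α β => V α β - W α β) (f ∘ gridRound N) α|)
        + (∫ β in Set.Ioc (0 : ℝ) 1, |f (gridRound N β) - f β|)
        + ∫ α in Set.Ioc (0 : ℝ) 1, |graphonOp W f (gridRound N α) - graphonOp W f α| := by
  have hfr : Measurable (f ∘ gridRound N) := hf.comp (measurable_gridRound N)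
  have hfr1 : ∀ β ∈ Set.Ioc (0 : ℝ) 1, |(f ∘ gridRound N) β| ≤ 1 := fun β hβ =>
    hf1 _ (gridRound_mem_Icc N hβ.2)
  have hf1' : ∀ β ∈ Set.Ioc (0 : ℝ) 1, |f β| ≤ 1 := fun β hβ => hf1 β (Set.Ioc_subset_Icc_self hβ)
  have hoperator := integrableOn_graphonOp hW.1 hW.abs_le_one hf hf1'
  have hrounded : IntegrableOn (fun α => graphonOp W f (gridRound N α)) (Set.Ioc 0 1) :=
    integrableOn_unit_of_abs_le
      ((measurable_graphonOp hW.1 hf).comp (measurable_gridRound N))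
      fun α _ => abs_graphonOp_le hW.abs_le_one hf1' _
  have hstep := integrableOn_graphonOp hV hVB hfr hfr1
  have hsampled := integrableOn_graphonOp hW.1 hW.abs_le_one hfr hfr1
  have hsub (α : ℝ) := graphonOp_sub_left (integrableOn_mul_unit hV hVB hfr hfr1 α)
    (integrableOn_mul_unit hW.1 hW.abs_le_one hfr hfr1 α)
  have hdifference : IntegrableOn (graphonOp (fun α β => V α β - W α β) (f ∘ gridRound N))
      (Set.Ioc 0 1) := by
    rw [funext hsub]
    exact hstep.sub hsampled
  have hpointwise (α : ℝ) : |graphonOp V (f ∘ gridRound N) α - graphonOp W f (gridRound N α)| ≤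
      |graphonOp (fun α β => V α β - W α β) (f ∘ gridRound N) α|
        + (∫ β in Set.Ioc (0 : ℝ) 1, |f (gridRound N β) - f β|)
        + |graphonOp W f (gridRound N α) - graphonOp W f α| := by
    have hcontract := hW.abs_graphonOp_sub_graphonOp_le hfr hfr1 hf hf1' α
    rw [hsub, abs_sub_comm (graphonOp W f (gridRound N α))]
    exact (abs_sub_le _ (graphonOp W f α) _).trans
      (add_le_add_left ((abs_sub_le _ _ _).trans (add_le_add_right hcontract _)) _)
  refine (integral_mono (hstep.sub hrounded).abs
    ((hdifference.abs.add (integrable_const _)).add (hrounded.sub hoperator).abs)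
    hpointwise).trans_eq ?_
  rw [integral_add' (hdifference.abs.add (integrable_const _)) (hrounded.sub hoperator).abs,
    integral_add' hdifference.abs (integrable_const _)]
  simp

theorem graphonOp_stepGraphon_comp_gridRound (hN : N ≠ 0) (ξ : Fin N → Fin N → ℝ) (f : ℝ → ℝ)
    (α : ℝ) : graphonOp (stepGraphon ξ) (f ∘ gridRound N) α
      = (N : ℝ)⁻¹ * ∑ j, stepGraphon ξ (gridRound N α) (rep N j) * f (rep N j) := by
  rw [← integral_comp_gridRound hN fun β => stepGraphon ξ (gridRound N α) β * f β]
  simp only [graphonOp, stepGraphon_gridRound_gridRound hN, Function.comp_apply]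

theorem average_abs_sum_sub_graphonOp_eq_integral (hN : N ≠ 0) (ξ : Fin N → Fin N → ℝ)
    (W : ℝ → ℝ → ℝ) (f : ℝ → ℝ) :
    (N : ℝ)⁻¹ * ∑ i, |(N : ℝ)⁻¹ * ∑ j, ξ i j * f (rep N j) - graphonOp W f (rep N i)|
      = ∫ α in Set.Ioc (0 : ℝ) 1, |graphonOp (stepGraphon ξ) (f ∘ gridRound N) α
          - graphonOp W f (gridRound N α)| := by
  simp only [graphonOp_stepGraphon_comp_gridRound hN, integral_comp_gridRound hN fun α =>
    |(N : ℝ)⁻¹ * ∑ j, stepGraphon ξ α (rep N j) * f (rep N j) - graphonOp W f α|,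
    stepGraphon_rep_rep hN]

theorem tendsto_average_abs_sum_sub_graphonOp {ξ : (N : ℕ) → Fin N → Fin N → ℝ}
    (hconv : OpConvergesTo (fun N => stepGraphon (ξ N)) W) (hW : IsGraphon W)
    (hWc : GraphonAEContinuous W) (hf : Measurable f)
    (hf1 : ∀ β ∈ Set.Icc (0 : ℝ) 1, |f β| ≤ 1) (hfc : AEContinuousOnUnit f) :
    Tendsto (fun N : ℕ => (N : ℝ)⁻¹ * ∑ i : Fin N,
      |(N : ℝ)⁻¹ * ∑ j, ξ N i j * f (rep N j) - graphonOp W f (rep N i)|) atTop (𝓝 0) := by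
  have hf1' : ∀ β ∈ Set.Ioc (0 : ℝ) 1, |f β| ≤ 1 := fun β hβ => hf1 β (Set.Ioc_subset_Icc_self hβ)
  have hstep := hconv.tendsto_integral_abs_graphonOp_sub
    (fun N => hf.comp (measurable_gridRound N)) fun N β hβ => hf1 _ (gridRound_mem_Icc N hβ.2)
  have hsample := hfc.tendsto_integral_abs_comp_gridRound_sub hf hf1
  have hround := AEContinuousOnUnit.tendsto_integral_abs_comp_gridRound_sub
    (hWc.aeContinuousOnUnit_graphonOp hW hf hf1') (measurable_graphonOp hW.1 hf)
    fun α _ => abs_graphonOp_le hW.abs_le_one hf1' α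
  refine squeeze_zero' (.of_forall fun N => by positivity) ?_
    (by simpa only [add_zero] using (hstep.add hsample).add hround)
  filter_upwards [eventually_ne_atTop 0] with N hN
  rw [average_abs_sum_sub_graphonOp_eq_integral hN]
  exact integral_abs_graphonOp_comp_gridRound_sub_le (measurable_stepGraphon _)
    (abs_stepGraphon_le _) hW hf hf1 N

end Graphon

section MeanField

variable [Fintype 𝒳] {W : ℝ → ℝ → ℝ} {ν : ℝ → 𝒳 → ℝ}

theorem nbhd_mem_subProb (hW : IsGraphon W) (hν : ∀ x, Measurable (ν · x))
    (hν1 : ∀ β ∈ Set.Ioc (0 : ℝ) 1, ν β ∈ subProb 𝒳) (α : ℝ) : nbhd W ν α ∈ subProb 𝒳 := by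
  have hterm (β : ℝ) (hβ : β ∈ Set.Ioc (0 : ℝ) 1) := smul_mem_subProb (hW.2.2 α β) (hν1 β hβ)
  refine ⟨fun x => setIntegral_nonneg measurableSet_Ioc fun β hβ => (hterm β hβ).1 x, ?_⟩
  simp only [nbhd]
  rw [← integral_finsetSum _ fun x _ => integrableOn_mul_unit hW.1 hW.abs_le_one (hν x)
    (fun β hβ => abs_apply_le_one_of_mem_subProb (hν1 β hβ) x) α]
  refine le_of_abs_le (abs_setIntegral_unit_le fun β hβ => ?_)
  exact (abs_of_nonneg (Finset.sum_nonneg fun x _ => (hterm β hβ).1 x)).trans_le (hterm β hβ).2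

theorem tendsto_average_l1dist_graphNbhd_nbhd {ξ : (N : ℕ) → Fin N → Fin N → ℝ}
    (hconv : OpConvergesTo (fun N => stepGraphon (ξ N)) W) (hW : IsGraphon W)
    (hWc : GraphonAEContinuous W) (hν : ∀ x, Measurable (ν · x))
    (hν1 : ∀ β ∈ Set.Icc (0 : ℝ) 1, ν β ∈ subProb 𝒳) (hνc : ∀ x, AEContinuousOnUnit (ν · x)) :
    Tendsto (fun N : ℕ => (N : ℝ)⁻¹ * ∑ i : Fin N,
      l1dist (graphNbhd (ξ N) (fun k => ν (rep N k)) i) (nbhd W ν (rep N i))) atTop (𝓝 0) := by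
  have hcoordinate (x : 𝒳) := tendsto_average_abs_sum_sub_graphonOp hconv hW hWc (hν x)
    (fun β hβ => abs_apply_le_one_of_mem_subProb (hν1 β hβ) x) (hνc x)
  have hsum := tendsto_finsetSum Finset.univ fun x _ => hcoordinate x
  rw [Finset.sum_const_zero] at hsum
  refine hsum.congr fun N => ?_
  rw [← Finset.mul_sum, Finset.sum_comm]
  rfl

variable [Fintype 𝒰] {P : 𝒳 → 𝒰 → (𝒳 → ℝ) → 𝒳 → ℝ} {μ0 : 𝒳 → ℝ} {L : ℝ}
  {πe : ℝ → ℕ → 𝒳 → 𝒰 → ℝ} {μ : ℕ → ℝ → 𝒳 → ℝ}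

theorem KernelLipschitz.continuousWithinAt_comp (hPL : KernelLipschitz P L) {s : Set ℝ} {α : ℝ}
    (hα : α ∈ s) {G : ℝ → 𝒳 → ℝ} (hG : ∀ a ∈ s, G a ∈ subProb 𝒳)
    (hGc : ∀ x, ContinuousWithinAt (G · x) s α) (x : 𝒳) (u : 𝒰) (x' : 𝒳) :
    ContinuousWithinAt (fun a => P x u (G a) x') s α := by
  have hdist : Tendsto (fun a => L * l1dist (G a) (G α)) (𝓝[s] α) (𝓝 0) := by
    have hsum := tendsto_finsetSum Finset.univ fun x _ => ((hGc x).tendsto.sub_const (G α x)).abs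
    simpa only [l1dist, sub_self, abs_zero, Finset.sum_const_zero, mul_zero] using hsum.const_mul L
  refine tendsto_iff_norm_sub_tendsto_zero.2 (squeeze_zero' (.of_forall fun _ => norm_nonneg _)
    ?_ hdist)
  filter_upwards [self_mem_nhdsWithin] with a ha
  exact (abs_apply_sub_le_l1dist _ _ x').trans (hPL x u _ _ (hG a ha) (hG α hα))

theorem IsMeanFieldOf.succ_eq_vecMul (hμ : IsMeanFieldOf W P μ0 πe μ) (t : ℕ) {α : ℝ}
    (hα : α ∈ Set.Icc (0 : ℝ) 1) :
    μ (t + 1) α = μ t α ᵥ* policyMatrix P (πe α) t (nbhd W (μ t) α) :=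
  funext (hμ.2.2 t α hα)

theorem IsMeanFieldOf.eq_stateLaw (hμ : IsMeanFieldOf W P μ0 πe μ) (t : ℕ) {α : ℝ}
    (hα : α ∈ Set.Icc (0 : ℝ) 1) :
    μ t α = stateLaw P μ0 (fun s => nbhd W (μ s) α) (πe α) t := by
  induction t with
  | zero => exact hμ.2.1 α hα
  | succ t ih => rw [hμ.succ_eq_vecMul t hα, stateLaw_succ, ← ih]

theorem IsMeanFieldOf.mem_simplex (hμ : IsMeanFieldOf W P μ0 πe μ) (hW : IsGraphon W)
    (hP : IsKernel P) (hμ0 : μ0 ∈ simplex 𝒳) (hπe : ∀ α ∈ Set.Icc (0 : ℝ) 1, IsPolicy (πe α))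
    (t : ℕ) : ∀ α ∈ Set.Icc (0 : ℝ) 1, μ t α ∈ simplex 𝒳 := by
  induction t with
  | zero => exact fun α hα => (hμ.2.1 α hα).symm ▸ hμ0
  | succ t ih =>
    intro α hα
    rw [hμ.succ_eq_vecMul t hα]
    exact vecMul_mem_simplex (ih α hα) (policyMatrix_mem_simplex hP (hπe α hα)
      (nbhd_mem_subProb hW (hμ.1 t) (fun β hβ => simplex_subset_subProb
        (ih β (Set.Ioc_subset_Icc_self hβ))) α))

theorem IsMeanFieldOf.mem_subProb (hμ : IsMeanFieldOf W P μ0 πe μ) (hW : IsGraphon W)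
    (hP : IsKernel P) (hμ0 : μ0 ∈ simplex 𝒳) (hπe : ∀ α ∈ Set.Icc (0 : ℝ) 1, IsPolicy (πe α))
    (t : ℕ) : ∀ α ∈ Set.Icc (0 : ℝ) 1, μ t α ∈ subProb 𝒳 := fun α hα =>
  simplex_subset_subProb (hμ.mem_simplex hW hP hμ0 hπe t α hα)

theorem IsMeanFieldOf.nbhd_mem_subProb (hμ : IsMeanFieldOf W P μ0 πe μ) (hW : IsGraphon W)
    (hP : IsKernel P) (hμ0 : μ0 ∈ simplex 𝒳) (hπe : ∀ α ∈ Set.Icc (0 : ℝ) 1, IsPolicy (πe α))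
    (t : ℕ) (α : ℝ) : nbhd W (μ t) α ∈ subProb 𝒳 :=
  GMFG.nbhd_mem_subProb hW (hμ.1 t) (fun β hβ =>
    hμ.mem_subProb hW hP hμ0 hπe t β (Set.Ioc_subset_Icc_self hβ)) α

theorem IsMeanFieldOf.aeContinuousOnUnit (hμ : IsMeanFieldOf W P μ0 πe μ) (hW : IsGraphon W)
    (hWc : GraphonAEContinuous W) (hP : IsKernel P) (hPL : KernelLipschitz P L)
    (hμ0 : μ0 ∈ simplex 𝒳) (hπe : ∀ α ∈ Set.Icc (0 : ℝ) 1, IsPolicy (πe α))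
    (hπc : ∀ t x u, AEContinuousOnUnit fun α => πe α t x u) (t : ℕ) (x : 𝒳) :
    AEContinuousOnUnit (μ t · x) := by
  induction t generalizing x with
  | zero =>
    refine ae_restrict_of_forall_mem measurableSet_Ioc fun α hα => ?_
    exact (continuousWithinAt_const (b := μ0 x)).congr (fun a ha => congrFun (hμ.2.1 a ha) x)
      (congrFun (hμ.2.1 α (Set.Ioc_subset_Icc_self hα)) x)
  | succ t ih =>
    have hnbhd (y : 𝒳) : AEContinuousOnUnit (nbhd W (μ t) · y) :=
      hWc.aeContinuousOnUnit_graphonOp hW (hμ.1 t y) fun β hβ => abs_apply_le_one_of_mem_subProb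
        (hμ.mem_subProb hW hP hμ0 hπe t β (Set.Ioc_subset_Icc_self hβ)) y
    filter_upwards [ae_all_iff.2 ih, ae_all_iff.2 hnbhd,
      ae_all_iff.2 fun y => ae_all_iff.2 (hπc t y), ae_restrict_mem measurableSet_Ioc]
      with α hlaw hnbhd hpolicy hα
    have hstep : ContinuousWithinAt (fun a => ∑ y, μ t a y *
        ∑ u, πe a t y u * P y u (nbhd W (μ t) a) x) (Set.Icc 0 1) α :=
      tendsto_finsetSum _ fun y _ => (hlaw y).mul <| tendsto_finsetSum _ fun u _ =>
        (hpolicy y u).mul (hPL.continuousWithinAt_comp (Set.Ioc_subset_Icc_self hα)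
          (fun a _ => hμ.nbhd_mem_subProb hW hP hμ0 hπe t a) hnbhd y u x)
    exact hstep.congr (fun a ha => hμ.2.2 t a ha x) (hμ.2.2 t α (Set.Ioc_subset_Icc_self hα) x)

theorem GraphonLipschitz.graphonAEContinuous (hWL : GraphonLipschitz W L) :
    GraphonAEContinuous W := by
  refine ae_restrict_of_forall_mem measurableSet_Ioc fun α hα =>
    ae_restrict_of_forall_mem measurableSet_Ioc fun β hβ => ?_
  have hα' := Set.Ioc_subset_Icc_self hα
  have hβ' := Set.Ioc_subset_Icc_self hβ
  refine (LipschitzOnWith.of_dist_le' (K := L) fun a ha a' ha' => ?_).continuousOn α hα'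
  simpa only [Real.dist_eq, sub_self, abs_zero, add_zero] using hWL a β a' β ha hβ' ha' hβ'

theorem EnsembleLipschitzUpTo.aeContinuousOnUnit (hπ : EnsembleLipschitzUpTo πe) (t : ℕ) (x : 𝒳)
    (u : 𝒰) : AEContinuousOnUnit fun α => πe α t x u := by
  obtain ⟨L, D, hL⟩ := hπ
  filter_upwards [ae_restrict_mem measurableSet_Ioc,
    ae_restrict_of_ae (compl_mem_ae_iff.2 (D.finite_toSet.measure_zero volume))] with α hα hαD
  obtain ⟨ρ, hρ, hball⟩ := Metric.isOpen_iff.1 D.finite_toSet.isClosed.isOpen_compl α hαD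
  have hlipschitz : ContinuousOn (fun a => πe a t x u) (Set.Icc 0 1 ∩ Metric.ball α ρ) := by
    refine (LipschitzOnWith.of_dist_le' (K := L) fun a ha b hb => ?_).continuousOn
    exact hL t x u a ha.1 b hb.1 fun d hd hdab =>
      hball ((convex_ball α ρ).ordConnected.uIcc_subset ha.2 hb.2 hdab) hd
  exact (continuousWithinAt_inter (Metric.ball_mem_nhds α hρ)).1
    (hlipschitz α ⟨Set.Ioc_subset_Icc_self hα, Metric.mem_ball_self hρ⟩)

end MeanField
section Counting

variable {κ p : ℝ}

theorem card_sub_le_card_filter_lt {N : ℕ} {F : Fin N → ℝ} (hF0 : ∀ j, 0 ≤ F j) (hκ : 0 < κ)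
    (hN : N ≠ 0) (hF : (N : ℝ)⁻¹ * ∑ j, F j ≤ p * κ) :
    (1 - p) * N ≤ (Finset.univ.filter (F · < κ)).card := by
  have hmarkov : ((Finset.univ.filter (¬ F · < κ)).card : ℝ) * κ ≤ ∑ j, F j := by
    rw [← nsmul_eq_mul]
    exact (Finset.card_nsmul_le_sum _ F κ fun j hj => not_lt.1 (Finset.mem_filter.1 hj).2).trans
      (Finset.sum_le_sum_of_subset_of_nonneg (Finset.filter_subset _ _) fun j _ _ => hF0 j)
  have hcard : ((Finset.univ.filter (F · < κ)).card : ℝ)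
      + (Finset.univ.filter (¬ F · < κ)).card = N := by
    exact_mod_cast (Finset.card_filter_add_card_filter_not _).trans (Finset.card_fin N)
  have hbad : ((Finset.univ.filter (¬ F · < κ)).card : ℝ) ≤ p * N := by
    rw [inv_mul_le_iff₀ (by positivity)] at hF
    exact le_of_mul_le_mul_right (by linarith) hκ
  linarith

theorem eventually_exists_finset_forall_lt {F : (N : ℕ) → Fin N → ℝ} (hF0 : ∀ N j, 0 ≤ F N j)
    (hF : Tendsto (fun N : ℕ => (N : ℝ)⁻¹ * ∑ j, F N j) atTop (𝓝 0)) (hκ : 0 < κ) (hp : 0 < p) :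
    ∀ᶠ N : ℕ in atTop, ∃ S : Finset (Fin N), ⌊(1 - p) * (N : ℝ)⌋ ≤ (S.card : ℤ) ∧
      ∀ i ∈ S, F N i < κ := by
  filter_upwards [hF.eventually_le_const (mul_pos hp hκ), eventually_ne_atTop 0] with N hN hN0
  refine ⟨Finset.univ.filter (F N · < κ), ?_, fun i hi => (Finset.mem_filter.1 hi).2⟩
  exact_mod_cast (Int.floor_le _).trans (card_sub_le_card_filter_lt (hF0 N) hκ hN0 hN)

theorem tendsto_average_mul_sum {F : (N : ℕ) → ℕ → Fin N → ℝ}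
    (hF : ∀ s, Tendsto (fun N : ℕ => (N : ℝ)⁻¹ * ∑ j, F N s j) atTop (𝓝 0)) (c : ℝ) (t : ℕ) :
    Tendsto (fun N : ℕ => (N : ℝ)⁻¹ * ∑ j, c * ∑ s ∈ Finset.range t, F N s j) atTop (𝓝 0) := by
  have hsum := (tendsto_finsetSum (Finset.range t) fun s _ => hF s).const_mul c
  simp only [Finset.sum_const_zero, mul_zero] at hsum
  refine hsum.congr fun N => ?_
  rw [← Finset.mul_sum, ← Finset.mul_sum, Finset.sum_comm]
  ring

end Counting

section Convergence

variable [Fintype 𝒳] [Fintype 𝒰] {W : ℝ → ℝ → ℝ} {P : 𝒳 → 𝒰 → (𝒳 → ℝ) → 𝒳 → ℝ} {μ0 : 𝒳 → ℝ}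
  {L : ℝ} {πe : ℝ → ℕ → 𝒳 → 𝒰 → ℝ} {μ : ℕ → ℝ → 𝒳 → ℝ} {ξ : (N : ℕ) → Fin N → Fin N → ℝ}

theorem KernelLipschitz.mono (hPL : KernelLipschitz P L) {L' : ℝ} (h : L ≤ L') :
    KernelLipschitz P L' := fun x u ν ν' hν hν' =>
  (hPL x u ν ν' hν hν').trans (mul_le_mul_of_nonneg_right h (l1dist_nonneg ν ν'))

theorem IsEdgeWeights.mem_Icc {N : ℕ} {ξ : Fin N → Fin N → ℝ} (hξ : IsEdgeWeights ξ)
    (i j : Fin N) : ξ i j ∈ Set.Icc (0 : ℝ) 1 := by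
  rcases hξ.1 i j with h | h <;> simp [h]

theorem IsMeanFieldOf.tendsto_average_nbhdError (hμ : IsMeanFieldOf W P μ0 πe μ)
    (hW : IsGraphon W) (hWc : GraphonAEContinuous W)
    (hconv : OpConvergesTo (fun N => stepGraphon (ξ N)) W) (hP : IsKernel P)
    (hPL : KernelLipschitz P L) (hμ0 : μ0 ∈ simplex 𝒳)
    (hπe : ∀ α ∈ Set.Icc (0 : ℝ) 1, IsPolicy (πe α))
    (hπc : ∀ t x u, AEContinuousOnUnit fun α => πe α t x u) (s : ℕ) :
    Tendsto (fun N : ℕ => (N : ℝ)⁻¹ * ∑ j, nbhdError P μ0 (ξ N) (gammaN πe N)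
      (fun j s => nbhd W (μ s) (rep N j)) s j) atTop (𝓝 0) := by
  refine (tendsto_average_l1dist_graphNbhd_nbhd hconv hW hWc (hμ.1 s)
    (hμ.mem_subProb hW hP hμ0 hπe s)
    (hμ.aeContinuousOnUnit hW hWc hP hPL hμ0 hπe hπc s)).congr fun N => ?_
  simp only [hμ.eq_stateLaw s (rep_mem_Icc _)]
  rfl

theorem deviating_agent_state_convergence_general [DecidableEq 𝒳] (hμ0 : μ0 ∈ simplex 𝒳)
    (hP : IsKernel P) (hPL : KernelLipschitz P L) (hW : IsGraphon W)
    (hWc : GraphonAEContinuous W) (hξ : ∀ N i j, ξ N i j ∈ Set.Icc (0 : ℝ) 1)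
    (hconv : OpConvergesTo (fun N => stepGraphon (ξ N)) W)
    (hπe : ∀ α ∈ Set.Icc (0 : ℝ) 1, IsPolicy (πe α))
    (hπc : ∀ t x u, AEContinuousOnUnit fun α => πe α t x u) (hμ : IsMeanFieldOf W P μ0 πe μ)
    (C : ℝ) {ε p : ℝ} (hε : 0 < ε) (hp : 0 < p) (t : ℕ) :
    ∃ N' : ℕ, ∀ N > N', ∃ S : Finset (Fin N), ⌊(1 - p) * (N : ℝ)⌋ ≤ (S.card : ℤ) ∧
      ∀ i ∈ S, ∀ π : ℕ → 𝒳 → 𝒰 → ℝ, IsPolicy π → ∀ g : 𝒳 → ℝ, (∀ x, |g x| ≤ C) →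
        |(jointLaw P μ0 (ξ N) (Function.update (gammaN πe N) i π) t ⬝ᵥ fun X => g (X i))
          - stateLaw P μ0 (fun s => nbhd W (μ s) (rep N i)) π t ⬝ᵥ g| < ε := by
  set err : (N : ℕ) → ℕ → Fin N → ℝ := fun N =>
    nbhdError P μ0 (ξ N) (gammaN πe N) fun j s => nbhd W (μ s) (rep N j)
  have herr : ∀ s, Tendsto (fun N : ℕ => (N : ℝ)⁻¹ * ∑ j, err N s j) atTop (𝓝 0) :=
    hμ.tendsto_average_nbhdError hW hWc hconv hP hPL hμ0 hπe hπc
  have hcommon := (tendsto_sum_fluctuationRate |L| (Fintype.card 𝒳) herr t).const_mul (|C| * |L|)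
  rw [mul_zero] at hcommon
  have hlocal_nonneg (N : ℕ) (i : Fin N) : 0 ≤ |C| * |L| * ∑ s ∈ Finset.range t, err N s i :=
    mul_nonneg (by positivity) (Finset.sum_nonneg fun s _ => l1dist_nonneg _ _)
  have hlocal := eventually_exists_finset_forall_lt hlocal_nonneg
    (tendsto_average_mul_sum herr (|C| * |L|) t) (half_pos hε) hp
  obtain ⟨N', hN'⟩ := eventually_atTop.1 ((hcommon.eventually_lt_const (half_pos hε)).and hlocal)
  refine ⟨N', fun N hN => ?_⟩
  obtain ⟨hcommon, S, hcard, hS⟩ := hN' N hN.le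
  refine ⟨S, hcard, fun i hi π hπ g hg => ?_⟩
  have hbound := abs_jointLaw_update_sub_stateLaw_le (πs := gammaN πe N) hP (abs_nonneg L)
    (hPL.mono (le_abs_self L)) hμ0 (hξ N) (fun j => hπe _ (rep_mem_Icc j))
    (fun j s => hμ.nbhd_mem_subProb hW hP hμ0 hπe s (rep N j)) hπ i (abs_nonneg C) t
    fun x => (hg x).trans (le_abs_self C)
  rw [mul_add] at hbound
  linarith [hS i hi]

end Convergence

/-- convergence of the deviating agent's state law to its mean field
auxiliary system. Under Assumptions (W) and (Lip), for the N-agent policy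
(π¹,…,π^{i−1},π̂,π^{i+1},…,π^N) with (π¹,…,π^N) = Γ_N(𝛑), for any uniformly bounded
family 𝒢 of functions g : 𝒳 → ℝ and any ε, p > 0, t ∈ 𝒯, there exists N' such that
for all N > N': sup_{g∈𝒢} |E[g(X^i_t)] − E[g(X̂^{i/N}_t)]| < ε, uniformly over all
π̂ ∈ Π and all i in a set 𝒲_N of at least ⌊(1−p)N⌋ agents. -/
theorem deviating_agent_state_convergence
    {𝒳 𝒰 : Type*} [Fintype 𝒳] [DecidableEq 𝒳] [Nonempty 𝒳] [Fintype 𝒰] [Nonempty 𝒰]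
    (T : ℕ) (μ0 : 𝒳 → ℝ) (hμ0 : μ0 ∈ simplex 𝒳)
    (P : 𝒳 → 𝒰 → (𝒳 → ℝ) → 𝒳 → ℝ) (hP : IsKernel P)
    (r : 𝒳 → 𝒰 → (𝒳 → ℝ) → ℝ)
    (Lr LP LW : ℝ) (hrLip : RewardLipschitz r Lr) (hPLip : KernelLipschitz P LP)
    (W : ℝ → ℝ → ℝ) (hW : IsGraphon W) (hWLip : GraphonLipschitz W LW)
    (ξ : (N : ℕ) → Fin N → Fin N → ℝ) (hξ : ∀ N, IsEdgeWeights (ξ N))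
    (hWconv : OpConvergesTo (fun N => stepGraphon (ξ N)) W)
    (πe : ℝ → ℕ → 𝒳 → 𝒰 → ℝ)
    (hπe : ∀ α ∈ Set.Icc (0:ℝ) 1, IsPolicy (πe α))
    (hπemeas : ∀ t x u, Measurable fun α => πe α t x u)
    (hπeLip : EnsembleLipschitzUpTo πe)
    (μ : ℕ → ℝ → 𝒳 → ℝ) (hμ : IsMeanFieldOf W P μ0 πe μ)
    (𝒢 : Set (𝒳 → ℝ)) (Mg : ℝ) (h𝒢 : ∀ g ∈ 𝒢, ∀ x, |g x| ≤ Mg)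
    (ε p : ℝ) (hε : 0 < ε) (hp : 0 < p) (t : ℕ) (ht : t < T) :
    ∃ N' : ℕ, ∀ N > N', ∃ Wset : Finset (Fin N),
      ⌊(1 - p) * (N : ℝ)⌋ ≤ (Wset.card : ℤ) ∧
      ∀ i ∈ Wset, ∀ πd : ℕ → 𝒳 → 𝒰 → ℝ, IsPolicy πd → ∀ g ∈ 𝒢,
        |(∑ X : Fin N → 𝒳,
            jointLaw P μ0 (ξ N) (Function.update (gammaN πe N) i πd) t X * g (X i)) -
          ∑ x, stateLaw P μ0 (fun s => nbhd W (μ s) ((((i : ℕ) : ℝ) + 1) / N)) πd t x * g x|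
          < ε := by
  obtain ⟨N', hN'⟩ := deviating_agent_state_convergence_general hμ0 hP hPLip hW
    hWLip.graphonAEContinuous (fun N => (hξ N).mem_Icc) hWconv hπe hπeLip.aeContinuousOnUnit hμ Mg
    hε hp t
  exact ⟨N', fun N hN => (hN' N hN).imp fun _ hS =>
    ⟨hS.1, fun i hi πd hπd g hg => hS.2 i hi πd hπd g (h𝒢 g hg)⟩⟩

end GMFG
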